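/- arXiv:1605.07473 — 2 statements merged into one kernel-verified Lean document; each statement's English description precedes it below -/
import Mathlib

section
/- Fix an integer $d \ge 3$. Then, as the integer $g \to \infty$, the connected simple Hurwitz numbers satisfy $\lim_{g \to \infty} \; H_{g,d} \cdot \frac{(d!)^2}{2} \left(\frac{2}{d(d-1)}\right)^{2d + 2g - 2} \;=\; 1$; that is, $H_{g,d} \sim \frac{2}{(d!)^2} \left(\frac{d(d-1)}{2}\right)^{2d + 2g - 2}$ as $g \to \infty$. -/
open Real Filter Topology Equiv

/-- Connected simple Hurwitz numbers: `H_{g,d}` is `1/d!` times the number of tuples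
`(τ₁, …, τ_b)` (with `b = 2g + 2d - 2`) of transpositions in `S_d` whose ordered product is
the identity and which generate a subgroup acting transitively on `{1, …, d}`. -/
noncomputable def hurwitz (g d : ℕ) : ℝ :=
  (Nat.card {τ : Fin (2 * g + 2 * d - 2) → Equiv.Perm (Fin d) //
      (∀ i, (τ i).IsSwap) ∧ (List.ofFn τ).prod = 1 ∧
      ∀ x y : Fin d, ∃ σ ∈ Subgroup.closure (Set.range τ), σ x = y} : ℝ) /
    Nat.factorial d

/-!
Averaging over the set `S` of transpositions in the left regular representation of `S_d` is a
self-adjoint contraction, so its even powers converge to the orthogonal projection onto the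
eigenspace of its square for the eigenvalue `1`. By the equality case of the triangle inequality
that eigenspace consists of the vectors fixed by all products of two transpositions, that is, of the
`A_d`-invariants. Reading off the diagonal coefficient at the identity, the number of words of
length `2n` in `S` with product `1` is asymptotic to `|S| ^ (2n) / |A_d|`. All but an exponentially
small fraction of the words of length `2n` contain every transposition, so imposing transitivity
does not change the asymptotics.
-/

section Spectral

open Module End

variable {𝕜 E : Type*} [RCLike 𝕜] [NormedAddCommGroup E] [InnerProductSpace 𝕜 E]

lemma sq_eq_one_of_norm_eq_one_of_conj_eq {μ : 𝕜} (hnorm : ‖μ‖ = 1) (hconj : star μ = μ) :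
    μ ^ 2 = 1 := by
  have h := RCLike.mul_conj μ
  rw [starRingEnd_apply, hconj, hnorm] at h
  simpa [sq] using h

lemma eigenspace_le_orthogonal_eigenspace_sq_one {T : E →ₗ[𝕜] E} (hT : T.IsSymmetric) {μ : 𝕜}
    (hμ : μ ^ 2 ≠ 1) : eigenspace T μ ≤ (eigenspace (T ^ 2) 1)ᗮ := by
  have hle : eigenspace T μ ≤ eigenspace (T ^ 2) (μ ^ 2) := fun v hv ↦ by
    rw [mem_eigenspace_iff] at hv ⊢
    simp [sq, hv, smul_smul]
  exact hle.trans ((hT.pow 2).orthogonalFamily_eigenspaces.isOrtho hμ)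

theorem tendsto_pow_two_mul_apply_of_mem_eigenspace {T : E →ₗ[𝕜] E} (hT : T.IsSymmetric)
    (hcontr : ∀ v, ‖T v‖ ≤ ‖v‖) [(eigenspace (T ^ 2) 1).HasOrthogonalProjection] {μ : 𝕜} {v : E}
    (hv : v ∈ eigenspace T μ) :
    Tendsto (fun n : ℕ ↦ (T ^ (2 * n)) v) atTop
      (𝓝 ((eigenspace (T ^ 2) 1).starProjection v)) := by
  obtain rfl | hv0 := eq_or_ne v 0
  · simp
  have hvμ : HasEigenvector T μ v := ⟨hv, hv0⟩
  have hpow (n : ℕ) : (T ^ (2 * n)) v = (μ ^ 2) ^ n • v := by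
    rw [hvμ.pow_apply, pow_mul]
  have hnorm : ‖μ‖ ≤ 1 := by
    have h := hcontr v
    rw [hvμ.apply_eq_smul, norm_smul] at h
    exact le_of_mul_le_mul_right (by simpa using h) (norm_pos_iff.2 hv0)
  by_cases hsq : μ ^ 2 = 1
  · have hfix : v ∈ eigenspace (T ^ 2) 1 := by
      simpa [mem_eigenspace_iff, hsq] using hpow 1
    simp [hpow, hsq, Submodule.starProjection_eq_self_iff.2 hfix]
  · have hlt : ‖μ ^ 2‖ < 1 := by
      have hne : ‖μ‖ ≠ 1 := fun h ↦ hsq <| sq_eq_one_of_norm_eq_one_of_conj_eq h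
        (hT.conj_eigenvalue_eq_self (hasEigenvalue_of_hasEigenvector hvμ))
      rw [norm_pow]
      exact pow_lt_one₀ (norm_nonneg _) (lt_of_le_of_ne hnorm hne) two_ne_zero
    have hproj : (eigenspace (T ^ 2) 1).starProjection v = 0 :=
      (Submodule.starProjection_apply_eq_zero_iff _).2
        (eigenspace_le_orthogonal_eigenspace_sq_one hT hsq hv)
    simpa [hpow, hproj] using (tendsto_pow_atTop_nhds_zero_of_norm_lt_one hlt).smul_const v

theorem tendsto_pow_two_mul_apply {T : E →ₗ[𝕜] E} (hT : T.IsSymmetric)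
    (hcontr : ∀ v, ‖T v‖ ≤ ‖v‖) [FiniteDimensional 𝕜 E] (v : E) :
    Tendsto (fun n : ℕ ↦ (T ^ (2 * n)) v) atTop
      (𝓝 ((eigenspace (T ^ 2) 1).starProjection v)) := by
  have hspan : ⨆ μ, eigenspace T μ = ⊤ :=
    Submodule.orthogonal_eq_bot_iff.1 hT.orthogonalComplement_iSup_eigenspaces_eq_bot
  have hv : v ∈ ⨆ μ, eigenspace T μ := hspan ▸ Submodule.mem_top
  refine Submodule.iSup_induction _ (motive := fun v ↦ Tendsto (fun n : ℕ ↦ (T ^ (2 * n)) v) atTop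
    (𝓝 ((eigenspace (T ^ 2) 1).starProjection v))) hv ?_ ?_ ?_
  · exact fun μ w hw ↦ tendsto_pow_two_mul_apply_of_mem_eigenspace hT hcontr hw
  · simp
  · intro x y hx hy
    simpa using hx.add hy

variable (𝕜) in
lemma eq_of_sum_eq_card_smul {ι : Type*} {s : Finset ι} {x : ι → E} {v : E}
    (hnorm : ∀ i ∈ s, ‖x i‖ ≤ ‖v‖) (hsum : ∑ i ∈ s, x i = (s.card : 𝕜) • v) {i : ι}
    (hi : i ∈ s) : x i = v := by
  have hle : ∀ j ∈ s, RCLike.re (inner 𝕜 (x j) v) ≤ ‖v‖ ^ 2 := fun j hj ↦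
    (re_inner_le_norm _ _).trans (by rw [sq]; gcongr; exact hnorm j hj)
  have heq : ∑ j ∈ s, RCLike.re (inner 𝕜 (x j) v) = ∑ _j ∈ s, ‖v‖ ^ 2 := by
    rw [← map_sum, ← sum_inner, hsum, inner_smul_left, inner_self_eq_norm_sq_to_K]
    norm_cast
    simp
  exact eq_of_norm_le_re_inner_eq_norm_sq (𝕜 := 𝕜) (hnorm i hi)
    ((Finset.sum_eq_sum_iff_of_le hle).1 heq i hi)

end Spectral

lemma sum_pow_eq_sum_prod_ofFn {ι R : Type*} [Semiring R] (S : Finset ι) (f : ι → R) (n : ℕ) :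
    (∑ i ∈ S, f i) ^ n =
      ∑ w ∈ Fintype.piFinset fun _ : Fin n ↦ S, (List.ofFn fun i ↦ f (w i)).prod := by
  induction n with
  | zero => simp
  | succ n ih =>
    rw [pow_succ', ih, Finset.sum_mul_sum, ← Finset.sum_product']
    refine Finset.sum_equiv (Fin.consEquiv fun _ ↦ ι) (fun p ↦ ?_) (fun p _ ↦ ?_)
    · simp [Fin.consEquiv, Fin.forall_fin_succ]
    · simp [Fin.consEquiv, List.ofFn_succ]

section EvenSubgroup

open Pointwise

variable {G : Type*} [Group G]

/-- The subgroup generated by the products of two elements of `S`: the set of products of an even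
number of elements of `S` when `S` is closed under inversion. -/
def evenSubgroup (S : Set G) : Subgroup G :=
  Subgroup.closure (S * S)

lemma evenSubgroup_eq_ker {S : Set G} (ε : G →* ℤˣ) (hε : ∀ s ∈ S, ε s = -1)
    (hgen : Subgroup.closure S = ⊤) : evenSubgroup S = ε.ker := by
  have hmem {s t : G} (hs : s ∈ S) (ht : t ∈ S) : s * t ∈ evenSubgroup S :=
    Subgroup.subset_closure (Set.mul_mem_mul hs ht)
  refine le_antisymm ((Subgroup.closure_le _).2 ?_) fun g hg ↦ ?_
  · rintro _ ⟨s, hs, t, ht, rfl⟩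
    simp [MonoidHom.mem_ker, hε s hs, hε t ht]
  suffices h : ∀ g ∈ Subgroup.closure S, (ε g = 1 → g ∈ evenSubgroup S) ∧
      (ε g = -1 → ∀ t ∈ S, g * t ∈ evenSubgroup S) from (h g (hgen ▸ Subgroup.mem_top g)).1 hg
  intro g hg
  induction hg using Subgroup.closure_induction_right with
  | one => exact ⟨fun _ ↦ one_mem _, fun h ↦ by simp at h⟩
  | mul_right x _ s hs ih =>
    rw [map_mul, hε s hs]
    refine ⟨fun h ↦ ih.2 (neg_eq_iff_eq_neg.1 (by simpa using h)) s hs, fun h t ht ↦ ?_⟩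
    rw [mul_assoc]
    exact mul_mem (ih.1 (by simpa using h)) (hmem hs ht)
  | mul_inv_cancel x _ s hs ih =>
    rw [map_mul, map_inv, hε s hs]
    refine ⟨fun h ↦ ?_, fun h t ht ↦ ?_⟩
    · have hx := ih.2 (neg_eq_iff_eq_neg.1 (by simpa using h)) s hs
      simpa [mul_assoc] using mul_mem hx (inv_mem (hmem hs hs))
    · have hx := ih.1 (by simpa using h)
      simpa [mul_assoc] using mul_mem hx (mul_mem (inv_mem (hmem hs hs)) (hmem hs ht))

end EvenSubgroup

section Mean

open Module End Pointwise

variable {G 𝕜 E : Type*} [Group G] [RCLike 𝕜] [NormedAddCommGroup E] [InnerProductSpace 𝕜 E]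
  (ρ : G →* (E ≃ₗᵢ[𝕜] E)) {S : Finset G}

/-- The average of the isometries `ρ s` over `s ∈ S`; it is zero for `S = ∅`. -/
noncomputable def meanOperator (S : Finset G) : E →ₗ[𝕜] E :=
  (S.card : 𝕜)⁻¹ • ∑ s ∈ S, (ρ s).toLinearEquiv.toLinearMap

lemma meanOperator_apply (v : E) :
    meanOperator ρ S v = (S.card : 𝕜)⁻¹ • ∑ s ∈ S, ρ s v := by
  simp [meanOperator]

lemma meanOperator_pow_apply (n : ℕ) (v : E) :
    (meanOperator ρ S ^ n) v = ((S.card : 𝕜) ^ n)⁻¹ •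
      ∑ w ∈ Fintype.piFinset fun _ : Fin n ↦ S, ρ (List.ofFn w).prod v := by
  have hprod (l : List G) :
      (l.map fun g ↦ (ρ g).toLinearEquiv.toLinearMap).prod v = ρ l.prod v := by
    induction l generalizing v with
    | nil => simp
    | cons g l ih => simp [ih]
  simp_rw [← hprod, List.map_ofFn]
  simp [meanOperator, smul_pow, sum_pow_eq_sum_prod_ofFn, Function.comp_def]

lemma isSymmetric_meanOperator (hS : ∀ s ∈ S, s⁻¹ ∈ S) : (meanOperator ρ S).IsSymmetric := by
  intro v w
  have hadj (s : G) : inner 𝕜 (ρ s v) w = inner 𝕜 v (ρ s⁻¹ w) := by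
    rw [← (ρ s).inner_map_map v, map_inv]
    exact congrArg _ ((ρ s).apply_symm_apply w).symm
  simp only [meanOperator_apply, inner_smul_left, inner_smul_right, sum_inner, inner_sum, hadj]
  congr 1
  · simp
  · exact Finset.sum_nbij' (·⁻¹) (·⁻¹) hS hS (by simp) (by simp) (by simp)

lemma norm_meanOperator_apply_le (v : E) : ‖meanOperator ρ S v‖ ≤ ‖v‖ := by
  rw [meanOperator_apply, norm_smul, norm_inv, RCLike.norm_natCast]
  calc (S.card : ℝ)⁻¹ * ‖∑ s ∈ S, ρ s v‖
      ≤ (S.card : ℝ)⁻¹ * ∑ s ∈ S, ‖ρ s v‖ := by gcongr; exact norm_sum_le _ _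
    _ = ((S.card : ℝ)⁻¹ * S.card) * ‖v‖ := by simp [mul_assoc]
    _ ≤ ‖v‖ := mul_le_of_le_one_left (norm_nonneg v) inv_mul_le_one

lemma mem_eigenspace_meanOperator_sq_one_iff (hS : S.Nonempty) {v : E} :
    v ∈ eigenspace (meanOperator ρ S ^ 2) 1 ↔ ∀ h ∈ evenSubgroup (S : Set G), ρ h v = v := by
  have hcard : ((S.card : 𝕜) ^ 2) ≠ 0 := by simp [hS.ne_empty]
  have hsum : (meanOperator ρ S ^ 2) v =
      ((S.card : 𝕜) ^ 2)⁻¹ • ∑ p ∈ S ×ˢ S, ρ (p.1 * p.2) v := by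
    simp [sq, meanOperator_apply, smul_smul, Finset.sum_product_right, Finset.smul_sum]
  rw [mem_eigenspace_iff, one_smul, hsum, inv_smul_eq_iff₀ hcard]
  refine ⟨fun hfix h hh ↦ ?_, fun hfix ↦ ?_⟩
  · have hpair (p : G × G) (hp : p ∈ S ×ˢ S) : ρ (p.1 * p.2) v = v :=
      eq_of_sum_eq_card_smul 𝕜 (x := fun p : G × G ↦ ρ (p.1 * p.2) v)
        (fun p _ ↦ ((ρ (p.1 * p.2)).norm_map v).le) (by simpa [sq] using hfix) hp
    induction hh using Subgroup.closure_induction with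
    | mem x hx =>
      obtain ⟨s, hs, t, ht, rfl⟩ := hx
      exact hpair (s, t) (Finset.mk_mem_product hs ht)
    | one => simp
    | mul x y _ _ hx hy => simp [hx, hy]
    | inv x _ hx =>
      rw [map_inv]
      exact (ρ x).symm_apply_eq.2 hx.symm
  · rw [Finset.sum_congr rfl fun p hp ↦ hfix _ (Subgroup.subset_closure
      (Set.mul_mem_mul (Finset.mem_product.1 hp).1 (Finset.mem_product.1 hp).2))]
    simp [sq, ← Nat.cast_smul_eq_nsmul 𝕜]

lemma starProjection_eq_mean_of_mem_iff_forall {H : Subgroup G} [Fintype H] {K : Submodule 𝕜 E}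
    [K.HasOrthogonalProjection] (hK : ∀ w, w ∈ K ↔ ∀ h ∈ H, ρ h w = w) (v : E) :
    K.starProjection v = (Fintype.card H : 𝕜)⁻¹ • ∑ h : H, ρ h v := by
  refine Submodule.eq_starProjection_of_mem_of_inner_eq_zero ?_ fun w hw ↦ ?_
  · rw [hK]
    intro h hh
    have htranslate : ∑ x : H, ρ h (ρ x v) = ∑ x : H, ρ x v :=
      Fintype.sum_equiv (Equiv.mulLeft (⟨h, hh⟩ : H)) _ _ fun x ↦ by simp
    rw [map_smul, map_sum, htranslate]
  · have hinner (h : H) : inner 𝕜 (ρ h v) w = inner 𝕜 v w := by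
      rw [← (ρ h).inner_map_map v, (hK w).1 hw h h.2]
    simp [inner_sub_left, inner_smul_left, sum_inner, hinner]

theorem tendsto_meanOperator_pow_two_mul [FiniteDimensional 𝕜 E]
    [Fintype (evenSubgroup (S : Set G))] (hne : S.Nonempty) (hinv : ∀ s ∈ S, s⁻¹ ∈ S) (v : E) :
    Tendsto (fun n : ℕ ↦ (meanOperator ρ S ^ (2 * n)) v) atTop
      (𝓝 ((Fintype.card (evenSubgroup (S : Set G)) : 𝕜)⁻¹ •
        ∑ h : evenSubgroup (S : Set G), ρ h v)) := by
  rw [← starProjection_eq_mean_of_mem_iff_forall ρ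
    (fun _ ↦ mem_eigenspace_meanOperator_sq_one_iff ρ hne)]
  exact tendsto_pow_two_mul_apply (isSymmetric_meanOperator ρ hinv)
    (norm_meanOperator_apply_le ρ) v

end Mean

section Words

/-- The left regular representation of a finite group `G` on `ℓ²(G)`. -/
noncomputable def leftRegular (G : Type*) [Group G] [Fintype G] :
    G →* (EuclideanSpace ℝ G ≃ₗᵢ[ℝ] EuclideanSpace ℝ G) where
  toFun g := LinearIsometryEquiv.piLpCongrLeft 2 ℝ ℝ (Equiv.mulLeft g)
  map_one' := by
    ext v x
    change v ((1 : G)⁻¹ * x) = v x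
    rw [inv_one, one_mul]
  map_mul' g h := by
    ext v x
    change v ((g * h)⁻¹ * x) = v (h⁻¹ * (g⁻¹ * x))
    rw [mul_inv_rev, mul_assoc]

variable {G : Type*} [Group G]

lemma leftRegular_apply_single [Fintype G] [DecidableEq G] (g x : G) (a : ℝ) :
    leftRegular G g (EuclideanSpace.single x a) = EuclideanSpace.single (g * x) a :=
  EuclideanSpace.piLpCongrLeft_single _ _ _

/-- The words of length `n` in the alphabet `S` whose product is the identity. -/
def closedWords [DecidableEq G] (S : Finset G) (n : ℕ) : Finset (Fin n → G) :=
  {w ∈ Fintype.piFinset fun _ ↦ S | (List.ofFn w).prod = 1}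

lemma meanOperator_leftRegular_pow_apply_one [Fintype G] [DecidableEq G] (S : Finset G) (n : ℕ) :
    (meanOperator (leftRegular G) S ^ n) (EuclideanSpace.single 1 1) 1 =
      (closedWords S n).card / (S.card : ℝ) ^ n := by
  simp [meanOperator_pow_apply, leftRegular_apply_single, closedWords, Pi.single_apply,
    div_eq_inv_mul, eq_comm]

theorem tendsto_card_closedWords_div [Finite G] [DecidableEq G] {S : Finset G} (hne : S.Nonempty)
    (hinv : ∀ s ∈ S, s⁻¹ ∈ S) :
    Tendsto (fun n : ℕ ↦ ((closedWords S (2 * n)).card : ℝ) / (S.card : ℝ) ^ (2 * n)) atTop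
      (𝓝 (Nat.card (evenSubgroup (S : Set G)) : ℝ)⁻¹) := by
  have := Fintype.ofFinite G
  have := Fintype.ofFinite (evenSubgroup (S : Set G))
  have hlim := tendsto_meanOperator_pow_two_mul (leftRegular G) hne hinv
    (EuclideanSpace.single 1 1)
  have hcoord := ((EuclideanSpace.proj (𝕜 := ℝ) (1 : G)).continuous.tendsto _).comp hlim
  simpa [Function.comp_def, meanOperator_leftRegular_pow_apply_one, leftRegular_apply_single,
    Pi.single_apply, eq_comm] using hcoord

open scoped Classical in
/-- The words in `closedWords S n` whose letters generate the whole group. -/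
noncomputable def generatingClosedWords (S : Finset G) (n : ℕ) : Finset (Fin n → G) :=
  {w ∈ closedWords S n | Subgroup.closure (Set.range w) = ⊤}

open scoped Classical in
lemma card_piFinset_filter_not_subset_range_le {ι α : Type*} [Fintype ι] [DecidableEq ι]
    (S : Finset α) :
    Finset.card {w ∈ Fintype.piFinset fun _ : ι ↦ S | ¬ (S : Set α) ⊆ Set.range w} ≤
      S.card * (S.card - 1) ^ Fintype.card ι := by
  have hcover : {w ∈ Fintype.piFinset fun _ : ι ↦ S | ¬ (S : Set α) ⊆ Set.range w} ⊆
      S.biUnion fun s ↦ Fintype.piFinset fun _ : ι ↦ S.erase s := by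
    intro w hw
    obtain ⟨hwS, hmiss⟩ := Finset.mem_filter.1 hw
    obtain ⟨s, hs, hsw⟩ := Set.not_subset.1 hmiss
    exact Finset.mem_biUnion.2 ⟨s, hs, Fintype.mem_piFinset.2 fun i ↦ Finset.mem_erase.2
      ⟨fun h ↦ hsw ⟨i, h⟩, Fintype.mem_piFinset.1 hwS i⟩⟩
  refine (Finset.card_le_card hcover).trans (Finset.card_biUnion_le_card_mul _ _ _ fun s hs ↦ ?_)
  simp [Finset.card_erase_of_mem hs]

open scoped Classical in
lemma card_closedWords_le {S : Finset G} (hgen : Subgroup.closure (S : Set G) = ⊤) (n : ℕ) :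
    (closedWords S n).card ≤ (generatingClosedWords S n).card + S.card * (S.card - 1) ^ n := by
  have hcover : closedWords S n ⊆ generatingClosedWords S n ∪
      {w ∈ Fintype.piFinset fun _ : Fin n ↦ S | ¬ (S : Set G) ⊆ Set.range w} := by
    intro w hw
    by_cases hsub : (S : Set G) ⊆ Set.range w
    · refine Finset.mem_union_left _ (Finset.mem_filter.2 ⟨hw, ?_⟩)
      exact top_le_iff.1 (hgen ▸ Subgroup.closure_mono hsub)
    · exact Finset.mem_union_right _ (Finset.mem_filter.2 ⟨(Finset.mem_filter.1 hw).1, hsub⟩)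
  refine ((Finset.card_le_card hcover).trans (Finset.card_union_le _ _)).trans ?_
  gcongr
  simpa using card_piFinset_filter_not_subset_range_le (ι := Fin n) S

lemma tendsto_mul_sub_one_pow_div_pow {N : ℕ} (hN : 0 < N) :
    Tendsto (fun n : ℕ ↦ ((N * (N - 1) ^ n : ℕ) : ℝ) / (N : ℝ) ^ n) atTop (𝓝 0) := by
  have hratio : ((N - 1 : ℕ) : ℝ) / N < 1 := by
    rw [div_lt_one (by positivity)]
    exact_mod_cast Nat.sub_one_lt hN.ne'
  simpa [mul_div_assoc, div_pow] using
    (tendsto_pow_atTop_nhds_zero_of_lt_one (by positivity) hratio).const_mul (N : ℝ)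

theorem tendsto_card_generatingClosedWords_div [Finite G] {S : Finset G} (hne : S.Nonempty)
    (hinv : ∀ s ∈ S, s⁻¹ ∈ S) (hgen : Subgroup.closure (S : Set G) = ⊤) :
    Tendsto (fun n : ℕ ↦ ((generatingClosedWords S (2 * n)).card : ℝ) / (S.card : ℝ) ^ (2 * n))
      atTop (𝓝 (Nat.card (evenSubgroup (S : Set G)) : ℝ)⁻¹) := by
  classical
  have hclosed := tendsto_card_closedWords_div hne hinv
  have herror := (tendsto_mul_sub_one_pow_div_pow hne.card_pos).comp
    (tendsto_id.const_mul_atTop' two_pos)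
  refine tendsto_of_tendsto_of_tendsto_of_le_of_le (by simpa using hclosed.sub herror) hclosed
    (fun n ↦ ?_) (fun n ↦ ?_)
  · dsimp only [Function.comp, id]
    rw [← sub_div]
    gcongr
    rw [sub_le_iff_le_add]
    exact_mod_cast card_closedWords_le hgen (2 * n)
  · dsimp only
    gcongr
    unfold generatingClosedWords
    convert Finset.filter_subset _ _

end Words

section Swaps

open Equiv.Perm

lemma closure_eq_top_iff_of_isSwap {α : Type*} [Finite α] [DecidableEq α] {s : Set (Perm α)}
    (hs : ∀ σ ∈ s, σ.IsSwap) :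
    Subgroup.closure s = ⊤ ↔ ∀ x y, ∃ σ ∈ Subgroup.closure s, σ x = y := by
  refine ⟨fun htop x y ↦ ⟨swap x y, by simp [htop], swap_apply_left x y⟩, fun htrans ↦ ?_⟩
  have hpre : MulAction.IsPretransitive (Subgroup.closure s) α :=
    ⟨fun x y ↦ let ⟨σ, hσ, hxy⟩ := htrans x y; ⟨⟨σ, hσ⟩, hxy⟩⟩
  exact closure_of_isSwap_of_isPretransitive hs

variable {α : Type*} [Fintype α] [DecidableEq α]

/-- The transpositions of `α`, encoded by their cycle type. -/
def swaps (α : Type*) [Fintype α] [DecidableEq α] : Finset (Perm α) :=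
  {σ : Perm α | σ.cycleType = {2}}

lemma mem_swaps {σ : Perm α} : σ ∈ swaps α ↔ σ.IsSwap := by
  simp [swaps, isSwap_iff_cycleType]

lemma card_swaps [Nontrivial α] : (swaps α).card = (Fintype.card α).choose 2 := by
  simpa [swaps] using card_of_cycleType_singleton le_rfl (Fintype.one_lt_card (α := α))

lemma inv_mem_swaps {σ : Perm α} (hσ : σ ∈ swaps α) : σ⁻¹ ∈ swaps α := by
  simpa [swaps] using hσ

lemma swaps_nonempty [Nontrivial α] : (swaps α).Nonempty := by
  obtain ⟨x, y, hxy⟩ := exists_pair_ne α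
  exact ⟨swap x y, mem_swaps.2 ⟨x, y, hxy, rfl⟩⟩

lemma closure_swaps : Subgroup.closure (swaps α : Set (Perm α)) = ⊤ := by
  have hcoe : (swaps α : Set (Perm α)) = {σ | σ.IsSwap} := Set.ext fun _ ↦ mem_swaps
  rw [hcoe, closure_isSwap]

lemma evenSubgroup_swaps : evenSubgroup (swaps α : Set (Perm α)) = alternatingGroup α := by
  rw [alternatingGroup_eq_sign_ker]
  exact evenSubgroup_eq_ker sign (fun _ hσ ↦ (mem_swaps.1 hσ).sign_eq) closure_swaps

lemma inv_card_evenSubgroup_swaps [Nontrivial α] :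
    (Nat.card (evenSubgroup (swaps α : Set (Perm α))) : ℝ)⁻¹ = 2 / (Fintype.card α).factorial := by
  have hcard : (2 * Nat.card (alternatingGroup α) : ℝ) = (Fintype.card α).factorial := by
    rw [← Nat.card_eq_fintype_card, ← Nat.card_perm]
    exact_mod_cast two_mul_nat_card_alternatingGroup
  rw [evenSubgroup_swaps, ← hcard, div_mul_cancel_left₀ two_ne_zero]

lemma natCard_transitive_swap_factorizations (n : ℕ) :
    Nat.card {τ : Fin n → Perm α // (∀ i, (τ i).IsSwap) ∧ (List.ofFn τ).prod = 1 ∧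
      ∀ x y, ∃ σ ∈ Subgroup.closure (Set.range τ), σ x = y} =
      (generatingClosedWords (swaps α) n).card := by
  refine Nat.subtype_card _ fun τ ↦ ?_
  simp only [generatingClosedWords, closedWords, Finset.mem_filter, Fintype.mem_piFinset,
    mem_swaps, and_assoc]
  refine and_congr_right fun hτ ↦ and_congr_right fun _ ↦ ?_
  exact closure_eq_top_iff_of_isSwap (Set.forall_mem_range.2 hτ)

theorem tendsto_card_generatingClosedWords_swaps_div [Nontrivial α] :
    Tendsto (fun n : ℕ ↦ ((generatingClosedWords (swaps α) (2 * n)).card : ℝ) /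
      ((Fintype.card α).choose 2 : ℝ) ^ (2 * n)) atTop
      (𝓝 (2 / (Fintype.card α).factorial)) := by
  rw [← card_swaps, ← inv_card_evenSubgroup_swaps]
  exact tendsto_card_generatingClosedWords_div swaps_nonempty (fun _ ↦ inv_mem_swaps)
    closure_swaps

end Swaps

/-- for fixed `d ≥ 3`, the connected simple Hurwitz numbers grow like
`H_{g,d} ∼ (2/(d!)²) (d(d-1)/2)^(2d+2g-2)` as `g → ∞`. -/
theorem hurwitz_large_genus (d : ℕ) (hd : 3 ≤ d) :
    Tendsto
      (fun g : ℕ =>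
        hurwitz g d * (Nat.factorial d : ℝ) ^ 2 / 2 *
          (2 / ((d : ℝ) * ((d : ℝ) - 1))) ^ (2 * d + 2 * g - 2))
      atTop (𝓝 1) := by
  have hnontrivial : Nontrivial (Fin d) := Fin.nontrivial_iff_two_le.2 (by omega)
  have hfact : (d.factorial : ℝ) ≠ 0 := by positivity
  have hcount := (tendsto_card_generatingClosedWords_swaps_div (α := Fin d)).comp
    (tendsto_add_atTop_nat (d - 1))
  have hscaled := hcount.mul_const ((d.factorial : ℝ) / 2)
  rw [Fintype.card_fin, div_mul_div_cancel₀ hfact, div_self two_ne_zero] at hscaled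
  have hbase : 2 / ((d : ℝ) * (d - 1)) = (d.choose 2 : ℝ)⁻¹ := by rw [Nat.cast_choose_two, inv_div]
  refine hscaled.congr fun g ↦ ?_
  have hlength : 2 * g + 2 * d - 2 = 2 * (g + (d - 1)) := by omega
  have hexponent : 2 * d + 2 * g - 2 = 2 * (g + (d - 1)) := by omega
  rw [Function.comp_apply, hurwitz, natCard_transitive_swap_factorizations, hlength, hexponent,
    hbase, inv_pow]
  field_simp
end

section
/- Fix an integer $d \ge 5$ and set $b := 2g + 2d - 2$. Define $T_1(g) := \frac{2}{(d!)^2}\left(\frac{d(d-1)}{2}\right)^{b}$, $T_2(g) := \frac{2}{((d-1)!)^2}\left(\frac{(d-1)(d-2)}{2}\right)^{b}$, $T_3(g) := \frac{2}{d^2 ((d-2)!)^2}\left(\frac{d(d-3)}{2}\right)^{b}$, and $T_4(g) := \frac{1}{2((d-2)!)^2}\left(\frac{d^2 - 5d + 8}{2}\right)^{b}$. Then the connected simple Hurwitz numbers satisfy $\lim_{g \to \infty} \dfrac{H_{g,d} - T_1(g) + T_2(g) - T_3(g)}{T_4(g)} \;=\; -1$; that is, $H_{g,d} = T_1(g) -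 T_2(g) + T_3(g) - T_4(g) + o(T_4(g))$ as $g \to \infty$. -/
open Real Filter Topology Equiv

/-!
Up to the factor `1 / d!`, the Hurwitz number counts closed walks of length `b` in the Cayley graph
of `S_d` generated by the transpositions, restricted to the walks whose letters generate a
transitive group.

Without that restriction the count is governed by the spectrum of the adjacency operator. Twisting
by the sign character makes the spectrum symmetric, whence a factor `1 + (-1) ^ b`. A function whose
one-point marginals `∑ f σ` over `{σ | σ i = j}` all vanish only involves eigenvalues at most
`(d - 1) (d - 4) / 2`; this is an induction on `d`, restricting to the cosets of the point
stabilizers. Hence, up to sign, only the trivial and the standard representation contribute, with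
eigenvalues `d (d - 1) / 2` and `d (d - 3) / 2`.

For transitivity, let `M = (d ^ 2 - 5 d + 8) / 2` be the number of transpositions preserving a given
two-element set. All but `o(M ^ b)` words use at least `M` distinct transpositions, and such a word
is either transitive or preserves exactly one set of size one or two. The words preserving a point
are walks in `S_{d - 1}`, where all eigenvalues but the two extreme ones are less than `M` in
absolute value, and those preserving a two-element set are walks in `S_2 × S_{d - 2}` with leading
eigenvalue `M`.
-/

section Spectral

open Module.End Asymptotics

section Algebraic

variable {R E : Type*} [CommRing R] [AddCommGroup E] [Module R E] {A : Module.End R E}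

lemma pow_apply_of_apply_eq_smul {v : E} {μ : R} (hv : A v = μ • v) (b : ℕ) :
    (A ^ b) v = μ ^ b • v := by
  induction b with
  | zero => simp
  | succ b ih => rw [pow_succ, mul_apply, hv, map_smul, ih, smul_smul, pow_succ']

lemma exists_mem_eigenvector_of_hasEigenvalue_restrict {V : Submodule R E}
    (hV : ∀ v ∈ V, A v ∈ V) {μ : R} (hμ : HasEigenvalue (A.restrict hV) μ) :
    ∃ v ∈ V, v ≠ 0 ∧ A v = μ • v := by
  obtain ⟨v, hv⟩ := hμ.exists_hasEigenvector
  exact ⟨v, v.2, by simpa using hv.2, congrArg Subtype.val hv.apply_eq_smul⟩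

end Algebraic

variable {E : Type*} [NormedAddCommGroup E] [InnerProductSpace ℝ E] [FiniteDimensional ℝ E]
  {A : Module.End ℝ E} {V : Submodule ℝ E}

lemma inner_map_self_le_of_hasEigenvalue_le (hA : A.IsSymmetric) {θ : ℝ}
    (hθ : ∀ μ, HasEigenvalue A μ → μ ≤ θ) (v : E) : inner ℝ (A v) v ≤ θ * ‖v‖ ^ 2 := by
  let e := hA.eigenvectorBasis rfl
  have map_eq (i) : inner ℝ (A v) (e i) = hA.eigenvalues rfl i * inner ℝ v (e i) := by
    rw [hA, hA.apply_eigenvectorBasis]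
    simp [e, inner_smul_right]
  calc inner ℝ (A v) v
      = ∑ i, hA.eigenvalues rfl i * (inner ℝ v (e i) * inner ℝ (e i) v) := by
        simp only [← e.sum_inner_mul_inner (A v) v, map_eq, mul_assoc]
    _ ≤ ∑ i, θ * (inner ℝ v (e i) * inner ℝ (e i) v) := by
        refine Finset.sum_le_sum fun i _ => mul_le_mul_of_nonneg_right
          (hθ _ (by exact_mod_cast hA.hasEigenvalue_eigenvalues rfl i)) ?_
        rw [real_inner_comm]
        exact mul_self_nonneg _
    _ = θ * ‖v‖ ^ 2 := by
        rw [← Finset.mul_sum, e.sum_inner_mul_inner, real_inner_self_eq_norm_sq]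

lemma inner_map_self_le_of_mem (hA : A.IsSymmetric) (hV : ∀ v ∈ V, A v ∈ V) {θ : ℝ}
    (hθ : ∀ μ : ℝ, ∀ v ∈ V, v ≠ 0 → A v = μ • v → μ ≤ θ) {v : E} (hv : v ∈ V) :
    inner ℝ (A v) v ≤ θ * ‖v‖ ^ 2 := by
  refine inner_map_self_le_of_hasEigenvalue_le (hA.restrict_invariant hV) (fun μ hμ => ?_) ⟨v, hv⟩
  obtain ⟨w, hw, hw₀, hAw⟩ := exists_mem_eigenvector_of_hasEigenvalue_restrict hV hμ
  exact hθ μ w hw hw₀ hAw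

lemma isLittleO_pow_apply_of_abs_hasEigenvalue_lt (hA : A.IsSymmetric) {M : ℝ}
    (hM : ∀ μ, HasEigenvalue A μ → |μ| < M) (v : E) :
    (fun b => (A ^ b) v) =o[atTop] fun b => M ^ b := by
  let e := hA.eigenvectorBasis rfl
  have expand (b : ℕ) : (A ^ b) v = ∑ i, hA.eigenvalues rfl i ^ b • e.repr v i • e i := by
    conv_lhs => rw [← e.sum_repr v]
    simp only [map_sum, map_smul]
    refine Finset.sum_congr rfl fun i _ => ?_
    rw [pow_apply_of_apply_eq_smul (hA.apply_eigenvectorBasis rfl i), smul_comm]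
    rfl
  simp only [expand]
  refine IsLittleO.fun_sum fun i _ => ?_
  have abs_lt : |hA.eigenvalues rfl i| < |M| :=
    (hM _ (by exact_mod_cast hA.hasEigenvalue_eigenvalues rfl i)).trans_le (le_abs_self M)
  refine IsBigO.trans_isLittleO ?_ (isLittleO_pow_pow_of_abs_lt_left abs_lt)
  exact IsBigO.of_bound ‖e.repr v i • e i‖ (.of_forall fun b => by rw [norm_smul, mul_comm])

lemma isLittleO_pow_apply_of_mem (hA : A.IsSymmetric) (hV : ∀ v ∈ V, A v ∈ V) {M : ℝ}
    (hM : ∀ μ : ℝ, ∀ v ∈ V, v ≠ 0 → A v = μ • v → |μ| < M) {v : E} (hv : v ∈ V) :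
    (fun b => (A ^ b) v) =o[atTop] fun b => M ^ b := by
  have restricted := isLittleO_pow_apply_of_abs_hasEigenvalue_lt (hA.restrict_invariant hV)
    (M := M) (fun μ hμ => ?_) ⟨v, hv⟩
  · refine (restricted.norm_left.congr_left fun b => ?_).of_norm_left
    rw [pow_restrict]
    rfl
  · obtain ⟨w, hw, hw₀, hAw⟩ := exists_mem_eigenvector_of_hasEigenvalue_restrict hV hμ
    exact hM μ w hw hw₀ hAw

end Spectral

section CayleyWalks

open Asymptotics

variable {G : Type*} [Group G] {T : Finset G}

/-- The adjacency operator `f ↦ (x ↦ ∑ t ∈ T, f (t * x))` of the Cayley graph of `G` with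
connection set `T`. Functions live in `EuclideanSpace` so as to carry the `ℓ²` inner product. -/
noncomputable def walkOp (T : Finset G) : Module.End ℝ (EuclideanSpace ℝ G) where
  toFun f := WithLp.toLp 2 fun x => ∑ t ∈ T, f (t * x)
  map_add' f g := by ext x; simp [Finset.sum_add_distrib]
  map_smul' c f := by ext x; simp [Finset.mul_sum]

lemma walkOp_apply (T : Finset G) (f : EuclideanSpace ℝ G) (x : G) :
    walkOp T f x = ∑ t ∈ T, f (t * x) := rfl

lemma walkOp_pow_apply (T : Finset G) (b : ℕ) (f : EuclideanSpace ℝ G) (x : G) :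
    (walkOp T ^ b) f x =
      ∑ τ ∈ Fintype.piFinset fun _ : Fin b => T, f ((List.ofFn τ).prod * x) := by
  induction b generalizing f x with
  | zero => simp
  | succ b ih =>
    rw [pow_succ, Module.End.mul_apply, ih]
    simp only [walkOp_apply, ← mul_assoc]
    rw [← Finset.sum_product_right']
    refine Finset.sum_equiv (Fin.consEquiv fun _ => G) (fun τ => ?_) fun τ _ => ?_
    · simp [Fin.consEquiv, Fin.forall_fin_succ]
    · simp [Fin.consEquiv]

lemma walkOp_const (T : Finset G) (c : ℝ) :
    walkOp T (WithLp.toLp 2 fun _ => c) = (T.card : ℝ) • WithLp.toLp 2 fun _ => c := by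
  ext x
  simp [walkOp_apply]

/-- The number of words of length `b` in the letters `T` whose product is `1`, that is, of closed
walks of length `b` based at `1` in the Cayley graph. -/
def closedWalkCount [DecidableEq G] (T : Finset G) (b : ℕ) : ℕ :=
  {τ ∈ Fintype.piFinset fun _ : Fin b => T | (List.ofFn τ).prod = 1}.card

lemma closedWalkCount_eq_walkOp_pow [DecidableEq G] (T : Finset G) (b : ℕ) :
    (closedWalkCount T b : ℝ) = (walkOp T ^ b) (EuclideanSpace.single 1 1) 1 := by
  simp [walkOp_pow_apply, closedWalkCount]

lemma closedWalkCount_map [DecidableEq G] {K : Type*} [Group K] [DecidableEq K] (φ : K →* G)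
    (hφ : Function.Injective φ) (T : Finset K) (b : ℕ) :
    closedWalkCount (T.map ⟨φ, hφ⟩) b = closedWalkCount T b := by
  have prod_comp (τ : Fin b → K) : (List.ofFn (φ ∘ τ)).prod = φ (List.ofFn τ).prod := by
    rw [map_list_prod, List.map_ofFn]
  refine (Finset.card_nbij (φ ∘ ·) (fun τ hτ => ?_) (hφ.comp_left.injOn) fun τ hτ => ?_).symm
  · simp only [Finset.coe_filter, Fintype.mem_piFinset, Set.mem_ofPred_eq] at hτ ⊢
    exact ⟨fun i => Finset.mem_map_of_mem _ (hτ.1 i), by rw [prod_comp, hτ.2, map_one]⟩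
  · simp only [Finset.coe_filter, Fintype.mem_piFinset, Set.mem_ofPred_eq, Finset.mem_map,
      Function.Embedding.coeFn_mk] at hτ
    choose ρ hρ hφρ using hτ.1
    obtain rfl : φ ∘ ρ = τ := funext hφρ
    refine ⟨ρ, ?_, rfl⟩
    simpa [hρ, prod_comp, map_eq_one_iff φ hφ] using hτ.2

/-- Pointwise multiplication by a sign character `ε`. -/
noncomputable def signTwist (ε : G →* ℤˣ) : Module.End ℝ (EuclideanSpace ℝ G) where
  toFun f := WithLp.toLp 2 fun x => ((ε x : ℤ) : ℝ) * f x
  map_add' f g := by ext x; simp [mul_add]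
  map_smul' c f := by ext x; simp [mul_left_comm]

lemma signTwist_apply (ε : G →* ℤˣ) (f : EuclideanSpace ℝ G) (x : G) :
    signTwist ε f x = ((ε x : ℤ) : ℝ) * f x := rfl

lemma signTwist_signTwist (ε : G →* ℤˣ) (f : EuclideanSpace ℝ G) :
    signTwist ε (signTwist ε f) = f := by
  ext x
  rw [signTwist_apply, signTwist_apply, ← mul_assoc]
  rcases Int.units_eq_one_or (ε x) with h | h <;> simp [h]

lemma signTwist_single_one [DecidableEq G] (ε : G →* ℤˣ) :
    signTwist ε (EuclideanSpace.single 1 1) = EuclideanSpace.single 1 1 := by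
  ext x
  by_cases hx : x = 1 <;> simp [signTwist_apply, hx]

lemma walkOp_signTwist {ε : G →* ℤˣ} (hε : ∀ t ∈ T, ε t = -1) (f : EuclideanSpace ℝ G) :
    walkOp T (signTwist ε f) = -signTwist ε (walkOp T f) := by
  ext x
  simp only [walkOp_apply, signTwist_apply, PiLp.neg_apply, Finset.mul_sum,
    ← Finset.sum_neg_distrib]
  refine Finset.sum_congr rfl fun t ht => ?_
  simp [hε t ht]

lemma walkOp_pow_signTwist {ε : G →* ℤˣ} (hε : ∀ t ∈ T, ε t = -1) (b : ℕ)
    (f : EuclideanSpace ℝ G) :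
    (walkOp T ^ b) (signTwist ε f) = (-1 : ℝ) ^ b • signTwist ε ((walkOp T ^ b) f) := by
  induction b generalizing f with
  | zero => simp
  | succ b ih =>
    rw [pow_succ, Module.End.mul_apply, walkOp_signTwist hε, map_neg, ih, Module.End.mul_apply,
      pow_succ, mul_neg_one, neg_smul]

lemma apply_eq_apply_one_of_closure_eq_top (hgen : Subgroup.closure (T : Set G) = ⊤)
    {X : Type*} {f : G → X} (hf : ∀ t ∈ T, ∀ x, f (t * x) = f x) (x : G) : f x = f 1 := by
  have invariant (g : G) (hg : g ∈ Subgroup.closure (T : Set G)) (x : G) : f (g * x) = f x := by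
    induction hg using Subgroup.closure_induction generalizing x with
    | mem t ht => exact hf t ht x
    | one => simp
    | mul a b _ _ ha hb => rw [mul_assoc, ha, hb]
    | inv a _ ha => rw [← ha, mul_inv_cancel_left]
  simpa using invariant x (hgen ▸ Subgroup.mem_top x) 1

section Fintype

variable [Fintype G]

lemma walkOp_isSymmetric (hT : ∀ t ∈ T, t⁻¹ ∈ T) : (walkOp T).IsSymmetric := by
  intro f g
  simp only [PiLp.inner_apply, walkOp_apply, sum_inner, inner_sum]
  rw [Finset.sum_comm, Finset.sum_comm (s := Finset.univ)]
  refine Finset.sum_nbij' (·⁻¹) (·⁻¹) hT hT (by simp) (by simp) fun t _ => ?_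
  rw [← Equiv.sum_comp (Equiv.mulLeft t) fun x => inner ℝ (f x) (g (t⁻¹ * x))]
  simp

lemma sum_sq_sub_eq_card_mul_norm_sq_sub_inner (T : Finset G) (f : EuclideanSpace ℝ G) :
    ∑ x, ∑ t ∈ T, (f (t * x) - f x) ^ 2 = 2 * (T.card * ‖f‖ ^ 2 - inner ℝ (walkOp T f) f) := by
  have norm_translate (t : G) : ∑ x, f (t * x) ^ 2 = ‖f‖ ^ 2 := by
    rw [EuclideanSpace.real_norm_sq_eq]
    exact Equiv.sum_comp (Equiv.mulLeft t) fun x => f x ^ 2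
  have inner_eq : inner ℝ (walkOp T f) f = ∑ t ∈ T, ∑ x, f (t * x) * f x := by
    rw [Finset.sum_comm]
    simp only [PiLp.inner_apply, walkOp_apply, sum_inner]
    exact Finset.sum_congr rfl fun x _ => Finset.sum_congr rfl fun t _ => mul_comm _ _
  calc ∑ x, ∑ t ∈ T, (f (t * x) - f x) ^ 2
      = ∑ t ∈ T, (∑ x, f (t * x) ^ 2 + ∑ x, f x ^ 2 - 2 * ∑ x, f (t * x) * f x) := by
        rw [Finset.sum_comm]
        refine Finset.sum_congr rfl fun t _ => ?_
        rw [Finset.mul_sum, ← Finset.sum_add_distrib, ← Finset.sum_sub_distrib]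
        exact Finset.sum_congr rfl fun x _ => by ring
    _ = 2 * (T.card * ‖f‖ ^ 2 - inner ℝ (walkOp T f) f) := by
        simp only [norm_translate, ← EuclideanSpace.real_norm_sq_eq, Finset.sum_sub_distrib,
          Finset.sum_const, nsmul_eq_mul, ← Finset.mul_sum, inner_eq]
        ring

lemma sum_coe_units_eq_zero {ε : G →* ℤˣ} (hε : ε ≠ 1) : ∑ x, ((ε x : ℤ) : ℝ) = 0 := by
  have hom_ne : (Units.coeHom ℤ).comp ε ≠ 1 := fun h =>
    hε <| MonoidHom.ext fun x => Units.ext (DFunLike.congr_fun h x)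
  exact_mod_cast sum_hom_units_eq_zero _ hom_ne

end Fintype

variable [Finite G]

lemma apply_mul_eq_of_card_le_eigenvalue {f : EuclideanSpace ℝ G} {μ : ℝ}
    (hf : walkOp T f = μ • f) (hμ : T.card ≤ μ) {t : G} (ht : t ∈ T) (x : G) :
    f (t * x) = f x := by
  have := Fintype.ofFinite G
  have inner_eq : inner ℝ (walkOp T f) f = μ * ‖f‖ ^ 2 := by
    rw [hf, real_inner_smul_left, real_inner_self_eq_norm_sq]
  have sum_nonpos : ∑ x, ∑ t ∈ T, (f (t * x) - f x) ^ 2 ≤ 0 := by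
    rw [sum_sq_sub_eq_card_mul_norm_sq_sub_inner, inner_eq]
    nlinarith [sq_nonneg ‖f‖]
  have row_nonneg (x : G) : 0 ≤ ∑ t ∈ T, (f (t * x) - f x) ^ 2 :=
    Finset.sum_nonneg fun _ _ => sq_nonneg _
  have row_eq := (Finset.sum_eq_zero_iff_of_nonneg fun x _ => row_nonneg x).1
    (sum_nonpos.antisymm <| Finset.sum_nonneg fun x _ => row_nonneg x) x (Finset.mem_univ x)
  have entry_eq := (Finset.sum_eq_zero_iff_of_nonneg fun _ _ => sq_nonneg _).1 row_eq t ht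
  exact sub_eq_zero.1 (sq_eq_zero_iff.1 entry_eq)

-- The `signTwist`-stable part of `V` has spectrum symmetric about `0`, so an upper bound on the
-- eigenvalues is a bound on their absolute values; `single 1 1` is fixed by the twist.
lemma isLittleO_closedWalkCount_sub [DecidableEq G] (hT : ∀ t ∈ T, t⁻¹ ∈ T) {ε : G →* ℤˣ}
    (hε : ∀ t ∈ T, ε t = -1) {V : Submodule ℝ (EuclideanSpace ℝ G)}
    (hV : ∀ f ∈ V, walkOp T f ∈ V) {M : ℝ}
    (hM : ∀ μ : ℝ, ∀ f ∈ V, f ≠ 0 → walkOp T f = μ • f → μ < M) {u : EuclideanSpace ℝ G}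
    (hu : EuclideanSpace.single 1 1 - u - signTwist ε u ∈ V) :
    (fun b => (closedWalkCount T b : ℝ) - (1 + (-1) ^ b) * (walkOp T ^ b) u 1)
      =o[atTop] fun b => M ^ b := by
  have := Fintype.ofFinite G
  set w : EuclideanSpace ℝ G := EuclideanSpace.single 1 1 - u - signTwist ε u with hw
  have twist_w : signTwist ε w = w := by
    rw [hw, map_sub, map_sub, signTwist_single_one, signTwist_signTwist, sub_right_comm]
  have w_mem : w ∈ V ⊓ V.comap (signTwist ε) := ⟨hu, show signTwist ε w ∈ V by rwa [twist_w]⟩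
  have walkOp_mem : ∀ f ∈ V ⊓ V.comap (signTwist ε), walkOp T f ∈ V ⊓ V.comap (signTwist ε) := by
    rintro f ⟨hf, hf'⟩
    refine ⟨hV f hf, ?_⟩
    rw [SetLike.mem_coe, Submodule.mem_comap, ← V.neg_mem_iff, ← walkOp_signTwist hε]
    exact hV _ hf'
  have abs_lt : ∀ μ : ℝ, ∀ f ∈ V ⊓ V.comap (signTwist ε), f ≠ 0 → walkOp T f = μ • f →
      |μ| < M := by
    rintro μ f ⟨hf, hf'⟩ hf₀ hμ
    have twist_ne : signTwist ε f ≠ 0 := fun h => hf₀ <| by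
      rw [← signTwist_signTwist ε f, h, map_zero]
    have twist_eigen : walkOp T (signTwist ε f) = (-μ) • signTwist ε f := by
      rw [walkOp_signTwist hε, hμ, map_smul, neg_smul]
    exact abs_lt.2 ⟨neg_lt.1 (hM _ _ hf' twist_ne twist_eigen), hM μ f hf hf₀ hμ⟩
  have small := isLittleO_pow_apply_of_mem (walkOp_isSymmetric hT) walkOp_mem abs_lt w_mem
  refine ((isBigO_of_le _ fun b => PiLp.norm_apply_le ((walkOp T ^ b) w) 1).trans_isLittleO
    small).congr_left fun b => ?_
  rw [closedWalkCount_eq_walkOp_pow, hw, map_sub, map_sub, walkOp_pow_signTwist hε]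
  simp only [PiLp.sub_apply, PiLp.smul_apply, signTwist_apply, map_one, Units.val_one,
    Int.cast_one, one_mul, smul_eq_mul]
  ring

lemma isLittleO_closedWalkCount_of_closure_eq_top [DecidableEq G] (hT : ∀ t ∈ T, t⁻¹ ∈ T)
    (hT₀ : T.Nonempty) {ε : G →* ℤˣ} (hε : ∀ t ∈ T, ε t = -1)
    (hgen : Subgroup.closure (T : Set G) = ⊤) :
    (fun b => (closedWalkCount T b : ℝ) - (1 + (-1) ^ b) * ((T.card : ℝ) ^ b / Nat.card G))
      =o[atTop] fun b => (T.card : ℝ) ^ b := by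
  have := Fintype.ofFinite G
  let one : EuclideanSpace ℝ G := WithLp.toLp 2 fun _ => 1
  have mem_orthogonal (f : EuclideanSpace ℝ G) : f ∈ (ℝ ∙ one)ᗮ ↔ ∑ x, f x = 0 := by
    rw [Submodule.mem_orthogonal_singleton_iff_inner_right]
    simp [one, PiLp.inner_apply]
  have walkOp_one : walkOp T one = (T.card : ℝ) • one := walkOp_const T 1
  have walkOp_mem : ∀ f ∈ (ℝ ∙ one)ᗮ, walkOp T f ∈ (ℝ ∙ one)ᗮ := by
    intro f hf
    rw [Submodule.mem_orthogonal_singleton_iff_inner_right] at hf ⊢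
    rw [← walkOp_isSymmetric hT, walkOp_one, inner_smul_left, hf, mul_zero]
  have eigenvalue_lt : ∀ μ : ℝ, ∀ f ∈ (ℝ ∙ one)ᗮ, f ≠ 0 → walkOp T f = μ • f → μ < T.card := by
    intro μ f hf hf₀ hμ
    by_contra! hle
    have const := apply_eq_apply_one_of_closure_eq_top hgen fun t ht x =>
      apply_mul_eq_of_card_le_eigenvalue hμ hle ht x
    rw [mem_orthogonal, Finset.sum_congr rfl fun x _ => const x] at hf
    exact hf₀ (PiLp.ext fun x => by simpa [const x] using hf)
  have ε_ne : ε ≠ 1 := by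
    rintro rfl
    obtain ⟨t, ht⟩ := hT₀
    simpa using hε t ht
  have rest_mem : EuclideanSpace.single 1 1 - (Nat.card G : ℝ)⁻¹ • one -
      signTwist ε ((Nat.card G : ℝ)⁻¹ • one) ∈ (ℝ ∙ one)ᗮ := by
    rw [mem_orthogonal]
    simp [one, signTwist_apply, Finset.sum_sub_distrib, ← Finset.mul_sum,
      sum_coe_units_eq_zero ε_ne]
  refine (isLittleO_closedWalkCount_sub hT hε walkOp_mem eigenvalue_lt rest_mem).congr_left
    fun b => ?_
  rw [map_smul, pow_apply_of_apply_eq_smul walkOp_one]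
  simp [one, div_eq_inv_mul]

theorem isLittleO_closedWalkCount_sub_card_closure [DecidableEq G] (hT : ∀ t ∈ T, t⁻¹ ∈ T)
    (hT₀ : T.Nonempty) {ε : G →* ℤˣ} (hε : ∀ t ∈ T, ε t = -1) :
    (fun b => (closedWalkCount T b : ℝ) -
        (1 + (-1) ^ b) * ((T.card : ℝ) ^ b / Nat.card (Subgroup.closure (T : Set G))))
      =o[atTop] fun b => (T.card : ℝ) ^ b := by
  classical
  set H := Subgroup.closure (T : Set G)
  have mem_H : ∀ t ∈ T, t ∈ H := fun t ht => Subgroup.subset_closure ht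
  let T' : Finset H := T.subtype (· ∈ H)
  have map_T' : T'.map ⟨H.subtype, H.subtype_injective⟩ = T := Finset.subtype_map_of_mem mem_H
  have card_T' : T'.card = T.card := by rw [← map_T', Finset.card_map]
  have hT'₀ : T'.Nonempty := by rwa [← Finset.card_pos, card_T', Finset.card_pos]
  have hgen : Subgroup.closure (T' : Set H) = ⊤ := by
    rw [← Subgroup.closure_closure_coe_preimage (k := (T : Set G))]
    congr 1
    ext x
    simp [T', H]
  have h := isLittleO_closedWalkCount_of_closure_eq_top (T := T')
    (fun t => by simpa [T'] using hT t) hT'₀ (ε := ε.comp H.subtype)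
    (fun t => by simpa [T'] using hε t) hgen
  rw [card_T'] at h
  refine h.congr_left fun b => ?_
  rw [← map_T', closedWalkCount_map, Finset.card_map, card_T']

end CayleyWalks

section Transpositions

variable {α : Type*} [DecidableEq α]

lemma swap_eq_swap_iff_of_ne {a b x y : α} (hab : a ≠ b) :
    swap a b = swap x y ↔ a = x ∧ b = y ∨ a = y ∧ b = x := by
  refine ⟨fun h => ?_, ?_⟩
  · have image_a : swap x y a = b := by rw [← h, swap_apply_left]
    rw [swap_apply_def] at image_a
    grind
  · rintro (⟨rfl, rfl⟩ | ⟨rfl, rfl⟩)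
    exacts [rfl, swap_comm _ _]

lemma forall_swap_mem_iff {S : Finset α} {a b : α} :
    (∀ x, swap a b x ∈ S ↔ x ∈ S) ↔ (a ∈ S ↔ b ∈ S) := by
  refine ⟨fun h => by simpa using h b, fun h x => ?_⟩
  rw [swap_apply_def]
  grind

variable [Fintype α]

variable (α) in
/-- The finite set of transpositions of `α`, described as the permutations moving exactly two
points so that membership is decidable. -/
def transpositions : Finset (Perm α) := {t | t.support.card = 2}

lemma mem_transpositions {t : Perm α} : t ∈ transpositions α ↔ t.IsSwap := by
  simp [transpositions, Perm.card_support_eq_two]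

lemma swap_mem_transpositions {a b : α} : swap a b ∈ transpositions α ↔ a ≠ b := by
  rw [mem_transpositions]
  refine ⟨?_, fun h => ⟨a, b, h, rfl⟩⟩
  rintro h rfl
  obtain ⟨c, d, hcd, h⟩ := h
  exact hcd ((swap_eq_refl_iff).1 (h.symm.trans (swap_self a)))

lemma inv_mem_transpositions {t : Perm α} (ht : t ∈ transpositions α) :
    t⁻¹ ∈ transpositions α := by
  obtain ⟨a, b, -, rfl⟩ := mem_transpositions.1 ht
  rwa [swap_inv]

lemma sign_of_mem_transpositions {t : Perm α} (ht : t ∈ transpositions α) : t.sign = -1 :=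
  (mem_transpositions.1 ht).sign_eq

lemma sum_sum_swap (f : Perm α → ℝ) :
    ∑ a, ∑ b, f (swap a b) = 2 * ∑ t ∈ transpositions α, f t + Fintype.card α * f 1 := by
  have fiber {x y : α} (hxy : x ≠ y) :
      {p ∈ (Finset.univ : Finset α).offDiag | swap p.1 p.2 = swap x y} = {(x, y), (y, x)} := by
    ext ⟨a, b⟩
    simp only [Finset.mem_filter, Finset.mem_offDiag, Finset.mem_univ, true_and,
      Finset.mem_insert, Finset.mem_singleton, Prod.mk.injEq]
    have := swap_eq_swap_iff_of_ne (a := a) (b := b) (x := x) (y := y)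
    grind
  have off_diagonal : ∑ p ∈ (Finset.univ : Finset α).offDiag, f (swap p.1 p.2) =
      2 * ∑ t ∈ transpositions α, f t := by
    rw [← Finset.sum_fiberwise_of_maps_to (t := transpositions α) (g := fun p => swap p.1 p.2)
      (fun p hp => swap_mem_transpositions.2 (Finset.mem_offDiag.1 hp).2.2), Finset.mul_sum]
    refine Finset.sum_congr rfl fun t ht => ?_
    obtain ⟨x, y, hxy, rfl⟩ := mem_transpositions.1 ht
    rw [fiber hxy, Finset.sum_pair (by simp [hxy]), swap_comm y x, two_mul]
  rw [← Fintype.sum_prod_type' fun a b => f (swap a b), ← Finset.univ_product_univ,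
    ← Finset.diag_union_offDiag, Finset.sum_union (Finset.disjoint_diag_offDiag _), off_diagonal,
    Finset.sum_diag]
  simp [add_comm, Perm.one_def]

lemma card_transpositions :
    ((transpositions α).card : ℝ) = Fintype.card α * (Fintype.card α - 1) / 2 := by
  have h := sum_sum_swap (α := α) fun _ => 1
  simp only [Finset.sum_const, Finset.card_univ, nsmul_eq_mul, mul_one] at h
  linarith

lemma sum_transpositions_apply (F : α → ℝ) (j : α) :
    ∑ t ∈ transpositions α, F (t j) =
      Fintype.card α * (Fintype.card α - 3) / 2 * F j + ∑ a, F a := by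
  have h := sum_sum_swap (α := α) fun t => F (t j)
  have split (a b : α) : F (swap a b j) = F j + (if a = j then F b - F j else 0) +
      (if b = j then F a - F j else 0) := by
    rw [swap_apply_def]
    grind
  have sum_ite_left (g : α → ℝ) : (∑ a, ∑ b, if a = j then g b else 0) = ∑ b, g b := by
    rw [Finset.sum_comm]
    simp
  simp only [split, Finset.sum_add_distrib, sum_ite_left, Finset.sum_ite_eq', Finset.mem_univ,
    if_true, Finset.sum_sub_distrib, Finset.sum_const, Finset.card_univ, nsmul_eq_mul,
    Perm.one_apply] at h
  linarith

lemma sum_transpositions_apply_apply {F : α → α → ℝ} (diag_eq : ∀ p, F p p = 0)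
    (row_eq : ∀ p, ∑ q, F p q = 0) (column_eq : ∀ q, ∑ p, F p q = 0) {j k : α} (hjk : j ≠ k) :
    ∑ t ∈ transpositions α, F (t j) (t k) =
      ((Fintype.card α : ℝ) ^ 2 - 5 * Fintype.card α + 2) / 2 * F j k + F k j := by
  have h := sum_sum_swap (α := α) fun t => F (t j) (t k)
  have split (a b : α) : F (swap a b j) (swap a b k) = F j k +
      (if a = j then F b k - F j k else 0) + (if b = j then F a k - F j k else 0) +
      (if a = k then F j b - F j k else 0) + (if b = k then F j a - F j k else 0) +
      (if a = j then if b = k then F k j + F j k else 0 else 0) +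
      (if a = k then if b = j then F k j + F j k else 0 else 0) := by
    have := diag_eq j
    have := diag_eq k
    simp only [swap_apply_def]
    by_cases a = j <;> by_cases b = j <;> by_cases a = k <;> by_cases b = k <;> grind
  have sum_ite_left (u : α) (g : α → ℝ) : (∑ a, ∑ b, if a = u then g b else 0) = ∑ b, g b := by
    rw [Finset.sum_comm]
    simp
  simp only [split, Finset.sum_add_distrib, sum_ite_left, Finset.sum_ite_eq', Finset.mem_univ,
    if_true, Finset.sum_sub_distrib, row_eq, column_eq, Finset.sum_const, Finset.card_univ,
    nsmul_eq_mul, Perm.one_apply] at h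
  linarith

/-- The transpositions that map `S` to itself, that is, those swapping two points of `S` or two
points of its complement. -/
def transpositionsPreserving (S : Finset α) : Finset (Perm α) :=
  {t ∈ transpositions α | ∀ x, t x ∈ S ↔ x ∈ S}

lemma mem_transpositionsPreserving {S : Finset α} {t : Perm α} :
    t ∈ transpositionsPreserving S ↔ t ∈ transpositions α ∧ ∀ x, t x ∈ S ↔ x ∈ S := by
  simp [transpositionsPreserving]

lemma swap_mem_transpositionsPreserving {S : Finset α} {a b : α} :
    swap a b ∈ transpositionsPreserving S ↔ a ≠ b ∧ (a ∈ S ↔ b ∈ S) := by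
  rw [mem_transpositionsPreserving, swap_mem_transpositions, forall_swap_mem_iff]

lemma card_transpositionsPreserving (S : Finset α) :
    ((transpositionsPreserving S).card : ℝ) = (S.card * (S.card - 1) +
      (Fintype.card α - S.card) * (Fintype.card α - S.card - 1)) / 2 := by
  have h := sum_sum_swap (α := α) fun t => if ∀ x, t x ∈ S ↔ x ∈ S then 1 else 0
  have split (a b : α) : (if a ∈ S ↔ b ∈ S then (1 : ℝ) else 0) =
      (if a ∈ S then 1 else 0) * (if b ∈ S then 1 else 0) +
        (1 - if a ∈ S then 1 else 0) * (1 - if b ∈ S then 1 else 0) := by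
    split_ifs <;> simp_all
  have sum_indicator : ∑ a, (if a ∈ S then (1 : ℝ) else 0) = S.card := by simp
  have sum_one : ∑ _a : α, (1 : ℝ) = Fintype.card α := by simp
  have sum_eq : ∑ t ∈ transpositions α, (if ∀ x, t x ∈ S ↔ x ∈ S then (1 : ℝ) else 0) =
      (transpositionsPreserving S).card := by simp [transpositionsPreserving]
  simp only [forall_swap_mem_iff, split, Finset.sum_add_distrib, ← Finset.sum_mul_sum,
    Finset.sum_sub_distrib, sum_indicator, sum_one, sum_eq, Perm.one_apply, implies_true,
    if_true] at h
  linarith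

lemma transpositionsPreserving_singleton (i : α) :
    transpositionsPreserving {i} =
      (transpositions {a // a ≠ i}).map ⟨Perm.ofSubtype, Perm.ofSubtype_injective⟩ := by
  ext t
  simp only [Finset.mem_map, mem_transpositions, Function.Embedding.coeFn_mk]
  constructor
  · intro ht
    obtain ⟨a, b, -, rfl⟩ := mem_transpositions.1 (mem_transpositionsPreserving.1 ht).1
    obtain ⟨hab, hi⟩ := swap_mem_transpositionsPreserving.1 ht
    simp only [Finset.mem_singleton] at hi
    have ha : a ≠ i := by grind
    have hb : b ≠ i := by grind
    exact ⟨swap ⟨a, ha⟩ ⟨b, hb⟩, ⟨_, _, by simpa using hab, rfl⟩, Perm.ofSubtype_swap_eq _ _⟩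
  · rintro ⟨_, ⟨⟨a, ha⟩, ⟨b, hb⟩, hab, rfl⟩, rfl⟩
    rw [Perm.ofSubtype_swap_eq, swap_mem_transpositionsPreserving]
    exact ⟨by simpa using hab, by simp [ha, hb]⟩

lemma sum_sum_transpositionsPreserving_singleton (g : Perm α → ℝ) :
    ∑ i, ∑ t ∈ transpositionsPreserving {i}, g t =
      (Fintype.card α - 2) * ∑ t ∈ transpositions α, g t := by
  have forall_iff (t : Perm α) (i : α) : (∀ x, t x ∈ ({i} : Finset α) ↔ x ∈ ({i} : Finset α)) ↔
      i ∉ t.support := by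
    simp only [Finset.mem_singleton, Perm.notMem_support]
    exact ⟨fun h => (h i).2 rfl, fun h x => ⟨fun hx => t.injective (hx.trans h.symm), by grind⟩⟩
  simp only [transpositionsPreserving, forall_iff, Finset.sum_filter]
  rw [Finset.sum_comm, Finset.mul_sum]
  refine Finset.sum_congr rfl fun t ht => ?_
  have card_support : t.support.card = 2 := by simpa [transpositions] using ht
  rw [← Finset.sum_filter, Finset.sum_const, nsmul_eq_mul, ← Finset.compl_filter,
    Finset.filter_univ_mem, Finset.card_compl, Nat.cast_sub (Finset.card_le_univ _), card_support,
    Nat.cast_ofNat]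

end Transpositions

section Marginals

variable {α : Type*} [DecidableEq α] {f : EuclideanSpace ℝ (Perm α)}

lemma ofSubtype_ne_apply_self {i : α} (ρ : Perm {a // a ≠ i}) : Perm.ofSubtype ρ i = i :=
  Perm.ofSubtype_apply_of_not_mem ρ (by simp)

variable [Fintype α]

/-- The total mass that a function on permutations puts on `{σ | σ i = j}`. -/
noncomputable def marginal (i j : α) : EuclideanSpace ℝ (Perm α) →ₗ[ℝ] ℝ where
  toFun f := ∑ σ with σ i = j, f σ
  map_add' f g := by simp [Finset.sum_add_distrib]
  map_smul' c f := by simp [Finset.mul_sum]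

lemma marginal_apply (i j : α) (f : EuclideanSpace ℝ (Perm α)) :
    marginal i j f = ∑ σ with σ i = j, f σ := rfl

/-- The total mass that `f` puts on `{σ | σ i = p ∧ σ k = q}`. -/
noncomputable def pairMarginal (f : EuclideanSpace ℝ (Perm α)) (i k p q : α) : ℝ :=
  ∑ σ with σ i = p ∧ σ k = q, f σ

variable (α) in
/-- The functions on permutations all of whose one-point marginals vanish: the orthogonal complement
of the trivial and the standard isotypic components of the regular representation. -/
noncomputable def marginalKer : Submodule ℝ (EuclideanSpace ℝ (Perm α)) :=
  ⨅ i, ⨅ j, LinearMap.ker (marginal i j)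

lemma mem_marginalKer : f ∈ marginalKer α ↔ ∀ i j, marginal i j f = 0 := by
  simp [marginalKer, Submodule.mem_iInf]

lemma sum_filter_walkOp (T : Finset (Perm α)) (f : EuclideanSpace ℝ (Perm α))
    (P : Perm α → Prop) [DecidablePred P] :
    ∑ σ with P σ, walkOp T f σ = ∑ t ∈ T, ∑ σ with P (t⁻¹ * σ), f σ := by
  simp only [walkOp_apply]
  rw [Finset.sum_comm]
  refine Finset.sum_congr rfl fun t _ => ?_
  rw [Finset.sum_filter, Finset.sum_filter,
    ← Equiv.sum_comp (Equiv.mulLeft t) fun σ => if P (t⁻¹ * σ) then f σ else 0]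
  simp

lemma marginal_walkOp (T : Finset (Perm α)) (f : EuclideanSpace ℝ (Perm α)) (i j : α) :
    marginal i j (walkOp T f) = ∑ t ∈ T, marginal i (t j) f := by
  simp only [marginal_apply, sum_filter_walkOp, Perm.mul_apply, Perm.inv_eq_iff_eq]

lemma pairMarginal_walkOp (T : Finset (Perm α)) (f : EuclideanSpace ℝ (Perm α)) (i k p q : α) :
    pairMarginal (walkOp T f) i k p q = ∑ t ∈ T, pairMarginal f i k (t p) (t q) := by
  simp only [pairMarginal, sum_filter_walkOp, Perm.mul_apply, Perm.inv_eq_iff_eq]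

lemma walkOp_mem_marginalKer (T : Finset (Perm α)) (hf : f ∈ marginalKer α) :
    walkOp T f ∈ marginalKer α := by
  rw [mem_marginalKer] at hf ⊢
  intro i j
  rw [marginal_walkOp]
  exact Finset.sum_eq_zero fun t _ => hf i (t j)

lemma pairMarginal_self (f : EuclideanSpace ℝ (Perm α)) {i k : α} (hik : i ≠ k) (p : α) :
    pairMarginal f i k p p = 0 := by
  refine Finset.sum_eq_zero fun σ hσ => ?_
  obtain ⟨hi, hk⟩ := (Finset.mem_filter.1 hσ).2
  exact absurd (σ.injective (hi.trans hk.symm)) hik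

lemma sum_pairMarginal_right (f : EuclideanSpace ℝ (Perm α)) (i k p : α) :
    ∑ q, pairMarginal f i k p q = marginal i p f := by
  simp only [pairMarginal, marginal_apply, ← Finset.filter_filter]
  exact Finset.sum_fiberwise _ _ _

lemma sum_pairMarginal_left (f : EuclideanSpace ℝ (Perm α)) (i k q : α) :
    ∑ p, pairMarginal f i k p q = marginal k q f := by
  simp only [pairMarginal, marginal_apply, and_comm (b := _ = q), ← Finset.filter_filter]
  exact Finset.sum_fiberwise _ _ _

lemma eq_zero_of_mem_marginalKer_of_card_le_two [Nonempty α] (hα : Fintype.card α ≤ 2)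
    (hf : f ∈ marginalKer α) : f = 0 := by
  obtain ⟨i⟩ := ‹Nonempty α›
  have eq_of_apply_eq {σ ρ : Perm α} (h : ρ i = σ i) : ρ = σ := by
    have support_subset : (σ⁻¹ * ρ).support ⊆ Finset.univ.erase i := fun x hx =>
      Finset.mem_erase.2 ⟨by rintro rfl; simp [h] at hx, Finset.mem_univ x⟩
    have card_support_le := Finset.card_le_card support_subset
    rw [Finset.card_erase_of_mem (Finset.mem_univ i), Finset.card_univ] at card_support_le
    exact (inv_mul_eq_one.1 (Perm.card_support_le_one.1 (by omega))).symm
  ext σ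
  have fiber : ({ρ | ρ i = σ i} : Finset (Perm α)) = {σ} := by
    ext ρ
    simpa using ⟨eq_of_apply_eq, fun h => by rw [h]⟩
  simpa [marginal_apply, fiber] using mem_marginalKer.1 hf i (σ i)

-- The pair marginals of `f` at `(p, q)` and `(q, p)` span an invariant plane on which the walk
-- operator has the two eigenvalues `(n - 1) (n - 4) / 2` and `n (n - 5) / 2`.
lemma eigenvalue_le_of_pairMarginal_ne_zero (hf : f ∈ marginalKer α) {μ : ℝ}
    (hμ : walkOp (transpositions α) f = μ • f) {i k p q : α} (hik : i ≠ k) (hpq : p ≠ q)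
    (hfpq : pairMarginal f i k p q ≠ 0) :
    μ ≤ (Fintype.card α - 1) * (Fintype.card α - 4) / 2 := by
  rw [mem_marginalKer] at hf
  set n := (Fintype.card α : ℝ)
  have eigen {p q : α} (hpq : p ≠ q) : μ * pairMarginal f i k p q =
      (n ^ 2 - 5 * n + 2) / 2 * pairMarginal f i k p q + pairMarginal f i k q p := by
    rw [← sum_transpositions_apply_apply (pairMarginal_self f hik)
      (fun p => by rw [sum_pairMarginal_right, hf])
      (fun q => by rw [sum_pairMarginal_left, hf]) hpq,
      ← pairMarginal_walkOp, hμ]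
    simp [pairMarginal, Finset.mul_sum]
  have annihilated : (μ - n * (n - 5) / 2) * (μ - (n - 1) * (n - 4) / 2) *
      pairMarginal f i k p q = 0 := by
    linear_combination (μ - (n ^ 2 - 5 * n + 2) / 2) * eigen hpq + eigen hpq.symm
  rcases mul_eq_zero.1 ((mul_eq_zero.1 annihilated).resolve_right hfpq) with h | h <;> linarith

lemma sum_filter_apply_eq (g : Perm α → ℝ) (i k : α) :
    ∑ σ with σ k = i, g σ = ∑ ρ : Perm {a // a ≠ i}, g (Perm.ofSubtype ρ * swap k i) := by
  symm
  refine Finset.sum_bij (fun ρ _ => Perm.ofSubtype ρ * swap k i) ?_ ?_ ?_ (fun _ _ => rfl)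
  · simp [ofSubtype_ne_apply_self]
  · intro ρ _ ρ' _ h
    exact Perm.ofSubtype_injective (mul_right_cancel h)
  · intro σ hσ
    have fixes : (σ * swap k i) i = i := by simpa using hσ
    have maps_ne (x : α) : (σ * swap k i) x ≠ i ↔ x ≠ i := by
      rw [← (σ * swap k i).injective.ne_iff (x := x) (y := i), fixes]
    refine ⟨(σ * swap k i).subtypePerm maps_ne, Finset.mem_univ _, ?_⟩
    rw [Perm.ofSubtype_subtypePerm _ fun x hx => by rintro rfl; exact hx fixes, mul_assoc,
      swap_mul_self, mul_one]

lemma sum_perm_eq_sum_coset (g : Perm α → ℝ) (i : α) :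
    ∑ σ, g σ = ∑ k, ∑ ρ : Perm {a // a ≠ i}, g (Perm.ofSubtype ρ * swap k i) := by
  rw [← Finset.sum_fiberwise _ fun σ : Perm α => σ⁻¹ i]
  simp only [Perm.inv_eq_iff_eq, eq_comm (a := i), sum_filter_apply_eq]

/-- The restriction of `f` to the coset `{σ | σ k = i}` of the stabilizer of `i`, read as a function
on the permutations of the other points. -/
noncomputable def cosetRestrict (f : EuclideanSpace ℝ (Perm α)) (i k : α) :
    EuclideanSpace ℝ (Perm {a // a ≠ i}) :=
  WithLp.toLp 2 fun ρ => f (Perm.ofSubtype ρ * swap k i)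

lemma inner_eq_sum_inner_cosetRestrict (f g : EuclideanSpace ℝ (Perm α)) (i : α) :
    inner ℝ f g = ∑ k, inner ℝ (cosetRestrict f i k) (cosetRestrict g i k) := by
  simp only [PiLp.inner_apply, cosetRestrict]
  exact sum_perm_eq_sum_coset (fun σ => inner ℝ (f σ) (g σ)) i

lemma cosetRestrict_walkOp (f : EuclideanSpace ℝ (Perm α)) (i k : α) :
    cosetRestrict (walkOp (transpositionsPreserving {i}) f) i k =
      walkOp (transpositions {a // a ≠ i}) (cosetRestrict f i k) := by
  ext ρ
  simp [cosetRestrict, walkOp_apply, transpositionsPreserving_singleton, mul_assoc]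

lemma marginal_cosetRestrict (f : EuclideanSpace ℝ (Perm α)) (i k : α) (p q : {a // a ≠ i}) :
    marginal p q (cosetRestrict f i k) = pairMarginal f k (swap k i p) i q := by
  rw [pairMarginal, ← Finset.filter_filter, Finset.sum_filter, sum_filter_apply_eq, marginal_apply,
    Finset.sum_filter]
  simp [cosetRestrict, Subtype.ext_iff]

lemma cosetRestrict_mem_marginalKer
    (hf : ∀ i k p q, i ≠ k → p ≠ q → pairMarginal f i k p q = 0) (i k : α) :
    cosetRestrict f i k ∈ marginalKer {a // a ≠ i} := by
  rw [mem_marginalKer]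
  intro p q
  rw [marginal_cosetRestrict]
  refine hf _ _ _ _ (fun h => p.2 ?_) q.2.symm
  simpa using (congrArg (swap k i) h).symm

end Marginals

section SpectralGap

variable {α : Type*} [Fintype α] [DecidableEq α] {f : EuclideanSpace ℝ (Perm α)} {θ : ℝ}

lemma inner_walkOp_transpositionsPreserving_singleton_le (i : α)
    (hf : ∀ k, cosetRestrict f i k ∈ marginalKer {a // a ≠ i})
    (hθ : ∀ h ∈ marginalKer {a // a ≠ i},
      inner ℝ (walkOp (transpositions {a // a ≠ i}) h) h ≤ θ * ‖h‖ ^ 2) :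
    inner ℝ (walkOp (transpositionsPreserving {i}) f) f ≤ θ * ‖f‖ ^ 2 := by
  rw [← real_inner_self_eq_norm_sq f, inner_eq_sum_inner_cosetRestrict _ _ i,
    inner_eq_sum_inner_cosetRestrict f f i, Finset.mul_sum]
  refine Finset.sum_le_sum fun k _ => ?_
  rw [cosetRestrict_walkOp, real_inner_self_eq_norm_sq]
  exact hθ _ (hf k)

lemma sum_inner_walkOp_transpositionsPreserving_singleton (f : EuclideanSpace ℝ (Perm α)) :
    ∑ i, inner ℝ (walkOp (transpositionsPreserving {i}) f) f =
      (Fintype.card α - 2) * inner ℝ (walkOp (transpositions α) f) f := by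
  have inner_walkOp (T : Finset (Perm α)) :
      inner ℝ (walkOp T f) f = ∑ t ∈ T, ∑ σ, f σ * f (t * σ) := by
    simp only [PiLp.inner_apply, walkOp_apply, RCLike.inner_apply, conj_trivial, Finset.mul_sum]
    exact Finset.sum_comm
  simp only [inner_walkOp, sum_sum_transpositionsPreserving_singleton]

-- If some pair marginal is nonzero, then it is itself an eigenfunction and pins down `μ`. Otherwise
-- `f` restricted to each coset of each point stabilizer lies in the marginal kernel one degree
-- down, and averaging over the stabilizers transports the bound for `n - 1` to one for `n`.
lemma eigenvalue_le_of_forall_inner_walkOp_le (hα : 2 < Fintype.card α)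
    (gap : ∀ i : α, ∀ h ∈ marginalKer {a // a ≠ i},
      inner ℝ (walkOp (transpositions {a // a ≠ i}) h) h ≤
        (Fintype.card α - 2) * (Fintype.card α - 5) / 2 * ‖h‖ ^ 2)
    (hf : f ∈ marginalKer α) (hf₀ : f ≠ 0) {μ : ℝ} (hμ : walkOp (transpositions α) f = μ • f) :
    μ ≤ (Fintype.card α - 1) * (Fintype.card α - 4) / 2 := by
  by_cases pairs : ∀ i k p q, i ≠ k → p ≠ q → pairMarginal f i k p q = 0
  · have sum_le := Finset.sum_le_sum fun i (_ : i ∈ Finset.univ) =>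
      inner_walkOp_transpositionsPreserving_singleton_le i
        (cosetRestrict_mem_marginalKer pairs i) (gap i)
    rw [sum_inner_walkOp_transpositionsPreserving_singleton, hμ, inner_smul_left,
      real_inner_self_eq_norm_sq, Finset.sum_const, Finset.card_univ, nsmul_eq_mul,
      conj_trivial] at sum_le
    have hn : (0 : ℝ) < Fintype.card α - 2 := sub_pos.2 (by exact_mod_cast hα)
    have scaled_le : (Fintype.card α - 2) * ‖f‖ ^ 2 * μ ≤
        (Fintype.card α - 2) * ‖f‖ ^ 2 * (Fintype.card α * (Fintype.card α - 5) / 2) := by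
      linarith
    have := le_of_mul_le_mul_left scaled_le (mul_pos hn (pow_pos (norm_pos_iff.2 hf₀) 2))
    linarith
  · push Not at pairs
    obtain ⟨i, k, p, q, hik, hpq, hfpq⟩ := pairs
    exact eigenvalue_le_of_pairMarginal_ne_zero hf hμ hik hpq hfpq

theorem inner_walkOp_transpositions_le {α : Type*} [Fintype α] [DecidableEq α] [Nonempty α]
    {f : EuclideanSpace ℝ (Perm α)} (hf : f ∈ marginalKer α) :
    inner ℝ (walkOp (transpositions α) f) f ≤
      (Fintype.card α - 1) * (Fintype.card α - 4) / 2 * ‖f‖ ^ 2 := by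
  induction hn : Fintype.card α using Nat.strong_induction_on generalizing α with
  | _ n ih =>
  subst hn
  refine inner_map_self_le_of_mem (walkOp_isSymmetric fun _ => inv_mem_transpositions)
    (fun _ => walkOp_mem_marginalKer _) (fun μ v hv hv₀ hμ => ?_) hf
  rcases Nat.lt_or_ge 2 (Fintype.card α) with hα₂ | hα₂
  · have card_ne (i : α) : Fintype.card {a // a ≠ i} = Fintype.card α - 1 := by simp
    refine eigenvalue_le_of_forall_inner_walkOp_le hα₂ (fun i h hh => ?_) hv hv₀ hμ
    have : Nonempty {a // a ≠ i} := Fintype.card_pos_iff.1 (by rw [card_ne]; omega)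
    refine (ih _ (by omega) hh (card_ne i)).trans_eq ?_
    rw [Nat.cast_sub (by omega)]
    ring
  · exact absurd (eq_zero_of_mem_marginalKer_of_card_le_two hα₂ hv) hv₀

end SpectralGap

section SymmetricGroupExpansion

open Asymptotics

variable (α : Type*) [Fintype α] [DecidableEq α]

/-- The character of the standard representation of the symmetric group, the number of fixed points
minus one. -/
noncomputable def standardCharacter : EuclideanSpace ℝ (Perm α) :=
  WithLp.toLp 2 fun σ => (∑ k, if σ k = k then 1 else 0) - 1

/-- The orthogonal projection of the point mass at `1` to the sum of the trivial and the standard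
isotypic components, written in terms of the two characters. -/
noncomputable def pointMassProjection : EuclideanSpace ℝ (Perm α) :=
  ((Fintype.card α).factorial : ℝ)⁻¹ •
    (WithLp.toLp 2 (fun _ => 1) + (Fintype.card α - 1 : ℝ) • standardCharacter α)

variable {α}

lemma standardCharacter_apply (σ : Perm α) :
    standardCharacter α σ = (∑ k, if σ k = k then 1 else 0) - 1 := rfl

lemma standardCharacter_one : standardCharacter α 1 = Fintype.card α - 1 := by
  simp [standardCharacter_apply]

lemma walkOp_standardCharacter :
    walkOp (transpositions α) (standardCharacter α) =
      (Fintype.card α * (Fintype.card α - 3) / 2 : ℝ) • standardCharacter α := by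
  ext σ
  have sum_transpositions (k : α) :
      ∑ t ∈ transpositions α, (if (t * σ) k = k then (1 : ℝ) else 0) =
        Fintype.card α * (Fintype.card α - 3) / 2 * (if σ k = k then 1 else 0) + 1 :=
    (sum_transpositions_apply (fun x => if x = k then (1 : ℝ) else 0) (σ k)).trans (by simp)
  simp only [walkOp_apply, standardCharacter_apply, Finset.sum_sub_distrib,
    PiLp.smul_apply, smul_eq_mul]
  rw [Finset.sum_comm, Finset.sum_congr rfl fun k _ => sum_transpositions k,
    Finset.sum_add_distrib, ← Finset.mul_sum]
  simp only [Finset.sum_const, Finset.card_univ, nsmul_eq_mul, mul_one, card_transpositions]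
  ring

lemma marginal_one (i j : α) :
    marginal i j (WithLp.toLp 2 fun _ => 1) = (Fintype.card α - 1).factorial := by
  rw [marginal_apply, sum_filter_apply_eq]
  simp [Fintype.card_perm]

lemma pairMarginal_one {i k p q : α} (hik : i ≠ k) (hpq : p ≠ q) :
    pairMarginal (WithLp.toLp 2 fun _ => 1) i k p q = (Fintype.card α - 2).factorial := by
  have hk : swap i p k ≠ p := by rw [swap_apply_def]; grind
  have h := marginal_cosetRestrict (WithLp.toLp 2 fun _ => 1) p i ⟨_, hk⟩ ⟨q, hpq.symm⟩
  rw [swap_apply_self] at h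
  rw [← h]
  exact (marginal_one _ _).trans (by simp [Nat.sub_sub])

lemma sum_filter_mul_standardCharacter (g : EuclideanSpace ℝ (Perm α)) (i j : α) :
    ∑ σ with σ i = j, g σ * standardCharacter α σ =
      ∑ k, pairMarginal g i k j k - marginal i j g := by
  simp only [standardCharacter_apply, mul_sub, mul_one, Finset.sum_sub_distrib, Finset.mul_sum,
    mul_ite, mul_zero, marginal_apply, pairMarginal, ← Finset.filter_filter]
  rw [Finset.sum_comm]
  simp only [← Finset.sum_filter]

lemma pairMarginal_one_eq_ite {m : ℕ} (hm : Fintype.card α = m + 2) (i j k : α) :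
    pairMarginal (WithLp.toLp 2 fun _ => 1) i k j k =
      m.factorial +
        (if k = i then (if i = j then ((m : ℝ) + 1) * m.factorial else 0) - m.factorial else 0) +
        (if k = j then (if i = j then 0 else -(m.factorial : ℝ)) else 0) := by
  by_cases hki : k = i
  · subst hki
    by_cases hkj : k = j
    · subst hkj
      have h : pairMarginal (WithLp.toLp 2 fun _ => 1) k k k k = ((m + 1).factorial : ℝ) := by
        simpa [pairMarginal, marginal_apply, hm] using marginal_one k k
      simp [h, Nat.factorial_succ]
    · have h (σ : Perm α) : ¬(σ k = j ∧ σ k = k) := fun h => hkj (h.2.symm.trans h.1)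
      simp [pairMarginal, hkj, h]
  · by_cases hkj : k = j
    · subst hkj
      simp [hki, pairMarginal_self _ (Ne.symm hki), Ne.symm hki]
    · simp [hki, hkj, pairMarginal_one (Ne.symm hki) (Ne.symm hkj), hm]

lemma card_sub_one_mul_marginal_standardCharacter (hα : 2 ≤ Fintype.card α) (i j : α) :
    (Fintype.card α - 1 : ℝ) * marginal i j (standardCharacter α) =
      ((if i = j then Fintype.card α else 0) - 1) * (Fintype.card α - 1).factorial := by
  obtain ⟨m, hm⟩ := Nat.exists_eq_add_of_le' hα
  have h := sum_filter_mul_standardCharacter (WithLp.toLp 2 fun _ => 1) i j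
  simp only [one_mul, ← marginal_apply, marginal_one, pairMarginal_one_eq_ite hm,
    Finset.sum_add_distrib, Finset.sum_ite_eq', Finset.mem_univ, if_true, Finset.sum_const,
    Finset.card_univ, nsmul_eq_mul, hm, Nat.add_one_sub_one, Nat.factorial_succ] at h
  rw [h, hm, Nat.add_one_sub_one, Nat.factorial_succ]
  push_cast
  split_ifs <;> ring

lemma pairMarginal_sign (hα : 4 ≤ Fintype.card α) (i k p q : α) :
    pairMarginal (signTwist Perm.sign (WithLp.toLp 2 fun _ => 1)) i k p q = 0 := by
  have one_lt_card_compl : 1 < ({p, q}ᶜ : Finset α).card := by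
    have := Finset.card_le_two (a := p) (b := q)
    rw [Finset.card_compl]
    omega
  obtain ⟨a, ha, b, hb, hab⟩ := Finset.one_lt_card.1 one_lt_card_compl
  simp only [Finset.mem_compl, Finset.mem_insert, Finset.mem_singleton, not_or] at ha hb
  refine Finset.sum_involution (fun σ _ => swap a b * σ) ?_ ?_ ?_ ?_
  · simp [signTwist_apply, hab]
  · simp [swap_eq_one_iff, hab]
  · simp only [Finset.mem_filter, Finset.mem_univ, true_and, Perm.mul_apply]
    rintro σ ⟨rfl, rfl⟩
    exact ⟨swap_apply_of_ne_of_ne (Ne.symm ha.1) (Ne.symm hb.1),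
      swap_apply_of_ne_of_ne (Ne.symm ha.2) (Ne.symm hb.2)⟩
  · simp

lemma marginal_pointMassProjection (hα : 2 ≤ Fintype.card α) (i j : α) :
    marginal i j (pointMassProjection α) = if i = j then 1 else 0 := by
  have factorial_eq : ((Fintype.card α).factorial : ℝ) =
      Fintype.card α * (Fintype.card α - 1).factorial := by
    exact_mod_cast (Nat.mul_factorial_pred (by omega)).symm
  have card_ne : (Fintype.card α : ℝ) ≠ 0 := by positivity
  rw [pointMassProjection, map_smul, map_add, map_smul, smul_eq_mul, smul_eq_mul, marginal_one,
    card_sub_one_mul_marginal_standardCharacter hα, factorial_eq]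
  split_ifs
  · field_simp
    ring
  · simp

lemma marginal_signTwist_pointMassProjection (hα : 4 ≤ Fintype.card α) (i j : α) :
    marginal i j (signTwist Perm.sign (pointMassProjection α)) = 0 := by
  have marginal_sign : marginal i j (signTwist Perm.sign (WithLp.toLp 2 fun _ => 1)) = 0 := by
    simpa [pairMarginal, marginal_apply] using pairMarginal_sign hα i i j j
  have marginal_character : marginal i j (signTwist Perm.sign (standardCharacter α)) = 0 := by
    have h := sum_filter_mul_standardCharacter (signTwist Perm.sign (WithLp.toLp 2 fun _ => 1)) i j
    simpa [pairMarginal_sign hα, marginal_sign, signTwist_apply, marginal_apply] using h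
  simp [pointMassProjection, marginal_sign, marginal_character]

lemma walkOp_pow_pointMassProjection_one (b : ℕ) :
    (walkOp (transpositions α) ^ b) (pointMassProjection α) 1 =
      ((Fintype.card α * (Fintype.card α - 1) / 2 : ℝ) ^ b + (Fintype.card α - 1) ^ 2 *
        (Fintype.card α * (Fintype.card α - 3) / 2) ^ b) / (Fintype.card α).factorial := by
  rw [pointMassProjection, map_smul, map_add, map_smul,
    pow_apply_of_apply_eq_smul (A := walkOp (transpositions α)) (walkOp_const _ 1),
    pow_apply_of_apply_eq_smul (A := walkOp (transpositions α)) walkOp_standardCharacter]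
  simp only [PiLp.smul_apply, PiLp.add_apply, standardCharacter_one, card_transpositions,
    smul_eq_mul]
  ring

theorem isLittleO_closedWalkCount_transpositions_sub (hα : 4 ≤ Fintype.card α) {M : ℝ}
    (hM : (Fintype.card α - 1) * (Fintype.card α - 4) / 2 < M) :
    (fun b => (closedWalkCount (transpositions α) b : ℝ) - (1 + (-1) ^ b) *
        (((Fintype.card α * (Fintype.card α - 1) / 2 : ℝ) ^ b + (Fintype.card α - 1) ^ 2 *
          (Fintype.card α * (Fintype.card α - 3) / 2) ^ b) / (Fintype.card α).factorial))
      =o[atTop] fun b => M ^ b := by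
  have : Nonempty α := Fintype.card_pos_iff.1 (by omega)
  have rest_mem : EuclideanSpace.single 1 1 - pointMassProjection α -
      signTwist Perm.sign (pointMassProjection α) ∈ marginalKer α := by
    rw [mem_marginalKer]
    intro i j
    rw [map_sub, map_sub, marginal_pointMassProjection (by omega),
      marginal_signTwist_pointMassProjection hα, marginal_apply]
    simp
  have eigenvalue_lt : ∀ μ : ℝ, ∀ f ∈ marginalKer α, f ≠ 0 →
      walkOp (transpositions α) f = μ • f → μ < M := by
    intro μ f hf hf₀ hμ
    have h := inner_walkOp_transpositions_le hf
    rw [hμ, inner_smul_left, real_inner_self_eq_norm_sq, conj_trivial] at h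
    exact (le_of_mul_le_mul_right h (by positivity)).trans_lt hM
  simpa only [walkOp_pow_pointMassProjection_one] using
    isLittleO_closedWalkCount_sub (fun _ => inv_mem_transpositions)
      (fun _ => sign_of_mem_transpositions) (fun _ => walkOp_mem_marginalKer _)
      eigenvalue_lt rest_mem

end SymmetricGroupExpansion

section YoungSubgroups

open Asymptotics

variable {α : Type*} {S : Finset α}

lemma apply_mem_iff_of_mem_closure {T : Set (Perm α)} (hT : ∀ t ∈ T, ∀ x, t x ∈ S ↔ x ∈ S)
    {σ : Perm α} (hσ : σ ∈ Subgroup.closure T) (x : α) : σ x ∈ S ↔ x ∈ S := by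
  induction hσ using Subgroup.closure_induction generalizing x with
  | mem t ht => exact hT t ht x
  | one => rfl
  | mul σ ρ _ _ hσ hρ => rw [Perm.mul_apply, hσ, hρ]
  | inv σ _ hσ => simpa using (hσ (σ⁻¹ x)).symm

variable [Fintype α] [DecidableEq α]

lemma mem_closure_transpositionsPreserving {σ : Perm α} :
    σ ∈ Subgroup.closure (transpositionsPreserving S : Set (Perm α)) ↔
      ∀ x, σ x ∈ S ↔ x ∈ S := by
  refine ⟨apply_mem_iff_of_mem_closure fun t ht => (mem_transpositionsPreserving.1 ht).2,
    fun hσ => ?_⟩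
  have isSwap : ∀ t ∈ (transpositionsPreserving S : Set (Perm α)), t.IsSwap := fun t ht =>
    mem_transpositions.1 (mem_transpositionsPreserving.1 ht).1
  refine (mem_closure_isSwap isSwap).2 ⟨Set.toFinite _, fun x => ?_⟩
  rw [← swap_mem_closure_isSwap isSwap]
  by_cases hx : σ x = x
  · rw [hx, swap_self]
    exact one_mem _
  · exact Subgroup.subset_closure (swap_mem_transpositionsPreserving.2 ⟨hx, hσ x⟩)

lemma card_closure_transpositionsPreserving (S : Finset α) :
    Nat.card (Subgroup.closure (transpositionsPreserving S : Set (Perm α))) =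
      S.card.factorial * (Fintype.card α - S.card).factorial := by
  have preserves_iff (σ : Perm α) :
      σ ∈ Subgroup.closure (transpositionsPreserving S : Set (Perm α)) ↔
        (fun a => decide (a ∈ S)) ∘ σ = fun a => decide (a ∈ S) := by
    simp [mem_closure_transpositionsPreserving, funext_iff]
  rw [Nat.card_congr (Equiv.subtypeEquivRight preserves_iff), Nat.card_eq_fintype_card,
    DomMulAct.stabilizer_card, Fintype.prod_bool]
  simp [Fintype.card_subtype_compl]

theorem isLittleO_closedWalkCount_transpositionsPreserving_sub
    (hS : (transpositionsPreserving S).Nonempty) :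
    (fun b => (closedWalkCount (transpositionsPreserving S) b : ℝ) - (1 + (-1) ^ b) *
        (((transpositionsPreserving S).card : ℝ) ^ b /
          (S.card.factorial * (Fintype.card α - S.card).factorial)))
      =o[atTop] fun b => ((transpositionsPreserving S).card : ℝ) ^ b := by
  have inv_mem : ∀ t ∈ transpositionsPreserving S, t⁻¹ ∈ transpositionsPreserving S := by
    intro t ht
    obtain ⟨a, b, -, rfl⟩ := mem_transpositions.1 (mem_transpositionsPreserving.1 ht).1
    rwa [swap_inv]
  have h := isLittleO_closedWalkCount_sub_card_closure inv_mem hS fun t ht =>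
    sign_of_mem_transpositions (mem_transpositionsPreserving.1 ht).1
  simpa only [card_closure_transpositionsPreserving, Nat.cast_mul] using h

theorem isLittleO_closedWalkCount_transpositionsPreserving_singleton_sub
    (hα : 5 ≤ Fintype.card α) (i : α) {M : ℝ}
    (hM : (Fintype.card α - 1) * (Fintype.card α - 4) / 2 < M) :
    (fun b => (closedWalkCount (transpositionsPreserving {i}) b : ℝ) - (1 + (-1) ^ b) *
        (((Fintype.card α - 1) * (Fintype.card α - 2) / 2 : ℝ) ^ b /
          (Fintype.card α - 1).factorial))
      =o[atTop] fun b => M ^ b := by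
  have card_ne : Fintype.card {a // a ≠ i} = Fintype.card α - 1 := by simp
  have hn : (5 : ℝ) ≤ Fintype.card α := by exact_mod_cast hα
  have cast_card_ne : ((Fintype.card α - 1 : ℕ) : ℝ) = Fintype.card α - 1 := by
    rw [Nat.cast_sub (by omega), Nat.cast_one]
  set n := (Fintype.card α : ℝ)
  have expansion := isLittleO_closedWalkCount_transpositions_sub (α := {a // a ≠ i}) (M := M)
    (by omega) (by rw [card_ne, cast_card_ne]; linarith)
  have second_term : (fun b : ℕ => (1 + (-1) ^ b) * ((n - 2) ^ 2 / (Fintype.card α - 1).factorial *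
      ((n - 1) * (n - 4) / 2) ^ b)) =o[atTop] fun b => M ^ b := by
    refine ((IsBigO.of_bound 2 (.of_forall fun b => ?_)).mul_isLittleO
      ((isLittleO_pow_pow_of_lt_left (by nlinarith) hM).const_mul_left _)).congr_right
      fun b => one_mul _
    rcases neg_one_pow_eq_or ℝ b with h | h <;> norm_num [h]
  refine (expansion.add second_term).congr_left fun b => ?_
  rw [transpositionsPreserving_singleton, closedWalkCount_map, card_ne, cast_card_ne]
  ring

end YoungSubgroups

section FewLetters

open Asymptotics

variable {X : Type*} [Fintype X] [DecidableEq X]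

variable (X) in
/-- The words of length `b` over the alphabet `X` using fewer than `m` distinct letters. -/
def wordsWithFewLetters (m b : ℕ) : Finset (Fin b → X) := {τ | (Finset.univ.image τ).card < m}

lemma mem_wordsWithFewLetters {m b : ℕ} {τ : Fin b → X} :
    τ ∈ wordsWithFewLetters X m b ↔ (Finset.univ.image τ).card < m :=
  Finset.mem_filter_univ τ

lemma card_wordsWithFewLetters_le (m b : ℕ) :
    (wordsWithFewLetters X m b).card ≤ 2 ^ Fintype.card X * (m - 1) ^ b := by
  have subset_biUnion : wordsWithFewLetters X m b ⊆
      ({P | P.card < m} : Finset (Finset X)).biUnion fun P => Fintype.piFinset fun _ => P := by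
    intro τ hτ
    refine Finset.mem_biUnion.2 ⟨Finset.univ.image τ, ?_, ?_⟩
    · exact (Finset.mem_filter_univ _).2 (mem_wordsWithFewLetters.1 hτ)
    · exact Fintype.mem_piFinset.2 fun i => Finset.mem_image_of_mem τ (Finset.mem_univ i)
  have card_words_le : ∀ P ∈ ({P | P.card < m} : Finset (Finset X)),
      (Fintype.piFinset fun _ : Fin b => P).card ≤ (m - 1) ^ b := by
    intro P hP
    rw [Fintype.card_piFinset_const]
    exact Nat.pow_le_pow_left (Nat.le_sub_one_of_lt (Finset.mem_filter.1 hP).2) b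
  calc (wordsWithFewLetters X m b).card
    _ ≤ _ := Finset.card_le_card subset_biUnion
    _ ≤ _ := Finset.card_biUnion_le_card_mul _ _ _ card_words_le
    _ ≤ Fintype.card (Finset X) * (m - 1) ^ b := Nat.mul_le_mul_right _ (Finset.card_le_univ _)
    _ = 2 ^ Fintype.card X * (m - 1) ^ b := by rw [Fintype.card_finset]

lemma isLittleO_card_wordsWithFewLetters {m : ℕ} (hm : 0 < m) :
    (fun b => ((wordsWithFewLetters X m b).card : ℝ)) =o[atTop] fun b => (m : ℝ) ^ b := by
  refine IsBigO.trans_isLittleO (g := fun b => ((m - 1 : ℕ) : ℝ) ^ b) ?_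
    (isLittleO_pow_pow_of_lt_left (Nat.cast_nonneg _) (by exact_mod_cast Nat.sub_one_lt_of_lt hm))
  refine IsBigO.of_bound (2 ^ Fintype.card X) (.of_forall fun b => ?_)
  rw [norm_of_nonneg (by positivity), norm_of_nonneg (by positivity)]
  exact_mod_cast card_wordsWithFewLetters_le m b

end FewLetters

section Transitivity

open Asymptotics

variable {α : Type*}

/-- The permutations `τ i` generate a group acting transitively on `α`. -/
def GeneratesTransitively {ι : Type*} (τ : ι → Perm α) : Prop :=
  ∀ x y, ∃ σ ∈ Subgroup.closure (Set.range τ), σ x = y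

noncomputable instance {ι : Type*} (τ : ι → Perm α) : Decidable (GeneratesTransitively τ) :=
  Classical.dec _

variable [Fintype α]

lemma generatesTransitively_iff {ι : Type*} {τ : ι → Perm α} :
    GeneratesTransitively τ ↔
      ∀ S : Finset α, S.Nonempty → (∀ i x, τ i x ∈ S ↔ x ∈ S) → S = Finset.univ := by
  classical
  refine ⟨fun h S ⟨x, hx⟩ hS => Finset.eq_univ_iff_forall.2 fun y => ?_, fun h x y => ?_⟩
  · obtain ⟨σ, hσ, rfl⟩ := h x y
    exact (apply_mem_iff_of_mem_closure (Set.forall_mem_range.2 hS) hσ x).2 hx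
  · let orbit : Finset α := {z | ∃ σ ∈ Subgroup.closure (Set.range τ), σ x = z}
    have orbit_eq_univ : orbit = Finset.univ := by
      refine h orbit ⟨x, by simpa [orbit] using ⟨1, one_mem _, rfl⟩⟩ fun i z => ?_
      have hi : τ i ∈ Subgroup.closure (Set.range τ) := Subgroup.subset_closure ⟨i, rfl⟩
      simp only [orbit, Finset.mem_filter_univ]
      constructor
      · rintro ⟨σ, hσ, hσx⟩
        exact ⟨(τ i)⁻¹ * σ, mul_mem (inv_mem hi) hσ, by simp [hσx]⟩
      · rintro ⟨σ, hσ, rfl⟩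
        exact ⟨τ i * σ, mul_mem hi hσ, rfl⟩
    simpa [orbit] using orbit_eq_univ.ge (Finset.mem_univ y)

variable {S S' S₀ : Finset α}

variable (α) in
/-- The subsets of `α` with one or two elements: for all but negligibly many words, they are the
only subsets that can witness intransitivity. -/
def smallSubsets : Finset (Finset α) := {S | S.card = 1 ∨ S.card = 2}

lemma mem_smallSubsets : S ∈ smallSubsets α ↔ S.card = 1 ∨ S.card = 2 :=
  Finset.mem_filter_univ S

lemma sum_smallSubsets {E : Type*} [AddCommMonoid E] (f : Finset α → E) :
    ∑ S ∈ smallSubsets α, f S =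
      ∑ i, f {i} + ∑ S ∈ Finset.powersetCard 2 Finset.univ, f S := by
  classical
  have smallSubsets_eq : smallSubsets α =
      Finset.powersetCard 1 Finset.univ ∪ Finset.powersetCard 2 Finset.univ := by
    ext S
    simp [mem_smallSubsets, Finset.mem_powersetCard]
  rw [smallSubsets_eq,
    Finset.sum_union (Finset.pairwise_disjoint_powersetCard _ (by decide)),
    Finset.powersetCard_one, Finset.sum_map]
  rfl

variable [DecidableEq α]

lemma transpositionsPreserving_compl (S : Finset α) :
    transpositionsPreserving Sᶜ = transpositionsPreserving S := by
  ext t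
  simp [mem_transpositionsPreserving, not_iff_not]

lemma card_transpositionsPreserving_of_card_eq_two (hS : S.card = 2) :
    ((transpositionsPreserving S).card : ℝ) =
      ((Fintype.card α : ℝ) ^ 2 - 5 * Fintype.card α + 8) / 2 := by
  rw [card_transpositionsPreserving, hS]
  push_cast
  ring

lemma transpositionsPreserving_nonempty (hS : S.card = 2) :
    (transpositionsPreserving S).Nonempty := by
  obtain ⟨a, b, hab, rfl⟩ := Finset.card_eq_two.1 hS
  exact ⟨swap a b, by simp [swap_mem_transpositionsPreserving, hab]⟩

lemma card_transpositionsPreserving_lt (hS₀ : S₀.card = 2) (hS : 3 ≤ S.card)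
    (hSα : S.card + 3 ≤ Fintype.card α) :
    (transpositionsPreserving S).card < (transpositionsPreserving S₀).card := by
  have hs : (3 : ℝ) ≤ S.card := by exact_mod_cast hS
  have hn : (S.card : ℝ) + 3 ≤ Fintype.card α := by exact_mod_cast hSα
  rw [← Nat.cast_lt (α := ℝ), card_transpositionsPreserving_of_card_eq_two hS₀,
    card_transpositionsPreserving]
  nlinarith [mul_pos (show (0 : ℝ) < S.card - 2 by linarith)
    (show (0 : ℝ) < Fintype.card α - 2 - S.card by linarith)]

lemma subset_or_disjoint_of_transpositionsPreserving_subset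
    (h : transpositionsPreserving S ⊆ transpositionsPreserving S') :
    S ⊆ S' ∨ Disjoint S S' := by
  have mem_of_mem {a b : α} (ha : a ∈ S) (hb : b ∈ S) (haS' : a ∈ S') : b ∈ S' := by
    obtain rfl | hab := eq_or_ne a b
    · exact haS'
    · exact (swap_mem_transpositionsPreserving.1
        (h (swap_mem_transpositionsPreserving.2 ⟨hab, iff_of_true ha hb⟩))).2.1 haS'
  rw [or_iff_not_imp_right, Finset.not_disjoint_iff]
  exact fun ⟨a, ha, haS'⟩ b hb => mem_of_mem ha hb haS'

lemma not_transpositionsPreserving_subset (hα : 5 ≤ Fintype.card α) (hS : S.card = 2)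
    (hS' : S' ∈ smallSubsets α) (hne : S ≠ S') :
    ¬ transpositionsPreserving S ⊆ transpositionsPreserving S' := by
  intro h
  have card_compl := Finset.card_add_card_compl S
  rw [mem_smallSubsets] at hS'
  have not_subset : ¬ S ⊆ S' := fun hsub =>
    hne (Finset.eq_of_subset_of_card_le hsub (by omega))
  have not_compl_subset : ¬ Sᶜ ⊆ S' := fun hsub => by
    have := Finset.card_le_card hsub
    omega
  have disjoint := (subset_or_disjoint_of_transpositionsPreserving_subset h).resolve_left not_subset
  have disjoint_compl := (subset_or_disjoint_of_transpositionsPreserving_subset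
    ((transpositionsPreserving_compl S).subset.trans h)).resolve_left not_compl_subset
  have hS'_empty : S' = ∅ := by
    rw [disjoint_compl_left_iff] at disjoint_compl
    exact Finset.disjoint_self_iff_empty _ |>.1 (disjoint.mono_left disjoint_compl)
  simp [hS'_empty] at hS'

lemma transpositionsPreserving_singleton_inter_ssubset {i j : α} (hij : i ≠ j) :
    transpositionsPreserving {i} ∩ transpositionsPreserving {j} ⊂
      transpositionsPreserving {i, j} := by
  refine Finset.ssubset_iff_subset_ne.2 ⟨fun t ht => ?_, fun h => ?_⟩
  · simp only [Finset.mem_inter, mem_transpositionsPreserving, Finset.mem_singleton] at ht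
    simp [mem_transpositionsPreserving, ht]
  · have swap_mem : swap i j ∈ transpositionsPreserving {i, j} := by
      simp [swap_mem_transpositionsPreserving, hij]
    rw [← h, Finset.mem_inter, swap_mem_transpositionsPreserving] at swap_mem
    simp [hij.symm] at swap_mem

lemma card_transpositionsPreserving_inter_lt (hα : 5 ≤ Fintype.card α) (hS₀ : S₀.card = 2)
    (hS : S ∈ smallSubsets α) (hS' : S' ∈ smallSubsets α) (hne : S ≠ S') :
    (transpositionsPreserving S ∩ transpositionsPreserving S').card <
      (transpositionsPreserving S₀).card := by
  suffices h : ∃ P, P.card = 2 ∧ transpositionsPreserving S ∩ transpositionsPreserving S' ⊂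
      transpositionsPreserving P by
    obtain ⟨P, hP, hlt⟩ := h
    have card_eq : (transpositionsPreserving P).card = (transpositionsPreserving S₀).card := by
      rw [← Nat.cast_inj (R := ℝ), card_transpositionsPreserving_of_card_eq_two hP,
        card_transpositionsPreserving_of_card_eq_two hS₀]
    exact card_eq ▸ Finset.card_lt_card hlt
  have inter_ssubset {P P' : Finset α} (hP : P.card = 2) (hP' : P' ∈ smallSubsets α)
      (hPP' : P ≠ P') :
      transpositionsPreserving P ∩ transpositionsPreserving P' ⊂ transpositionsPreserving P :=
    Finset.ssubset_iff_subset_ne.2 ⟨Finset.inter_subset_left, fun h =>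
      not_transpositionsPreserving_subset hα hP hP' hPP' (Finset.inter_eq_left.1 h)⟩
  rcases mem_smallSubsets.1 hS with hS₁ | hS₂
  · rcases mem_smallSubsets.1 hS' with hS'₁ | hS'₂
    · obtain ⟨i, rfl⟩ := Finset.card_eq_one.1 hS₁
      obtain ⟨j, rfl⟩ := Finset.card_eq_one.1 hS'₁
      have hij : i ≠ j := fun h => hne (h ▸ rfl)
      exact ⟨{i, j}, Finset.card_pair hij, transpositionsPreserving_singleton_inter_ssubset hij⟩
    · exact ⟨S', hS'₂, Finset.inter_comm _ (transpositionsPreserving S) ▸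
        inter_ssubset hS'₂ hS hne.symm⟩
  · exact ⟨S, hS₂, inter_ssubset hS₂ hS' hne⟩

section InvariantSmallSubsets

variable {ι : Type*} [Fintype ι] {τ : ι → Perm α}

lemma exists_mem_smallSubsets_of_not_generatesTransitively (hS₀ : S₀.card = 2)
    (hτ : ∀ i, τ i ∈ transpositions α)
    (many : (transpositionsPreserving S₀).card ≤ (Finset.univ.image τ).card)
    (h : ¬ GeneratesTransitively τ) :
    ∃ S ∈ smallSubsets α, ∀ i, τ i ∈ transpositionsPreserving S := by
  rw [generatesTransitively_iff] at h
  push Not at h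
  obtain ⟨S, S_nonempty, S_invariant, S_ne_univ⟩ := h
  have mem_S i : τ i ∈ transpositionsPreserving S :=
    mem_transpositionsPreserving.2 ⟨hτ i, S_invariant i⟩
  have card_pos := S_nonempty.card_pos
  have card_lt := (Finset.card_lt_iff_ne_univ S).2 S_ne_univ
  have card_extreme : S.card < 3 ∨ Fintype.card α < S.card + 3 := by
    by_contra! hmid
    refine (card_transpositionsPreserving_lt hS₀ hmid.1 hmid.2).not_ge (many.trans ?_)
    exact Finset.card_le_card (Finset.image_subset_iff.2 fun i _ => mem_S i)
  rcases card_extreme with hS | hS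
  · exact ⟨S, mem_smallSubsets.2 (by omega), mem_S⟩
  · refine ⟨Sᶜ, mem_smallSubsets.2 ?_, by rwa [transpositionsPreserving_compl]⟩
    rw [Finset.card_compl]
    omega

lemma eq_of_forall_mem_transpositionsPreserving (hα : 5 ≤ Fintype.card α) (hS₀ : S₀.card = 2)
    (many : (transpositionsPreserving S₀).card ≤ (Finset.univ.image τ).card)
    (hS : S ∈ smallSubsets α) (hS' : S' ∈ smallSubsets α)
    (hτS : ∀ i, τ i ∈ transpositionsPreserving S)
    (hτS' : ∀ i, τ i ∈ transpositionsPreserving S') : S = S' := by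
  by_contra hne
  refine (card_transpositionsPreserving_inter_lt hα hS₀ hS hS' hne).not_ge (many.trans ?_)
  exact Finset.card_le_card
    (Finset.image_subset_iff.2 fun i _ => Finset.mem_inter.2 ⟨hτS i, hτS' i⟩)

end InvariantSmallSubsets

lemma ite_generatesTransitively_add_card_smallSubsets {b : ℕ} {τ : Fin b → Perm α}
    (hα : 5 ≤ Fintype.card α) (hS₀ : S₀.card = 2) (hτ : ∀ i, τ i ∈ transpositions α)
    (many : (transpositionsPreserving S₀).card ≤ (Finset.univ.image τ).card) :
    (if GeneratesTransitively τ then 1 else 0) +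
      {S ∈ smallSubsets α | ∀ i, τ i ∈ transpositionsPreserving S}.card = 1 := by
  split_ifs with h
  · rw [Nat.add_eq_left, Finset.card_eq_zero, Finset.filter_eq_empty_iff]
    intro S hS hτS
    rw [mem_smallSubsets] at hS
    have S_eq_univ := generatesTransitively_iff.1 h S (Finset.card_pos.1 (by omega))
      fun i => (mem_transpositionsPreserving.1 (hτS i)).2
    rw [S_eq_univ, Finset.card_univ] at hS
    omega
  · obtain ⟨S, hS, hτS⟩ :=
      exists_mem_smallSubsets_of_not_generatesTransitively hS₀ hτ many h
    rw [zero_add, Finset.card_eq_one]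
    refine ⟨S, Finset.eq_singleton_iff_unique_mem.2 ⟨Finset.mem_filter.2 ⟨hS, hτS⟩, ?_⟩⟩
    intro S' hS'
    rw [Finset.mem_filter] at hS'
    exact eq_of_forall_mem_transpositionsPreserving hα hS₀ many hS'.1 hS hS'.2 hτS

/-- The number of words of length `b` in the letters `T` whose product is `1` and whose letters
generate a transitive group. -/
noncomputable def transitiveClosedWalkCount (T : Finset (Perm α)) (b : ℕ) : ℕ :=
  {τ ∈ Fintype.piFinset fun _ : Fin b => T |
    (List.ofFn τ).prod = 1 ∧ GeneratesTransitively τ}.card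

lemma closedWalkCount_transpositionsPreserving_eq (S : Finset α) (b : ℕ) :
    closedWalkCount (transpositionsPreserving S) b =
      {τ ∈ {τ ∈ Fintype.piFinset fun _ : Fin b => transpositions α | (List.ofFn τ).prod = 1} |
        ∀ i, τ i ∈ transpositionsPreserving S}.card := by
  rw [closedWalkCount, Finset.filter_filter]
  congr 1
  ext τ
  simp only [Finset.mem_filter, Fintype.mem_piFinset, mem_transpositionsPreserving]
  grind

/-- The error made on the word `τ` by the approximate inclusion-exclusion which detects
transitivity through small invariant subsets only. -/
noncomputable def transitivityDefect {b : ℕ} (τ : Fin b → Perm α) : ℝ :=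
  (if GeneratesTransitively τ then 1 else 0) - 1 +
    {S ∈ smallSubsets α | ∀ i, τ i ∈ transpositionsPreserving S}.card

lemma sum_transitivityDefect (b : ℕ) :
    ∑ τ ∈ Fintype.piFinset fun _ : Fin b => transpositions α with (List.ofFn τ).prod = 1,
        transitivityDefect τ =
      transitiveClosedWalkCount (transpositions α) b - closedWalkCount (transpositions α) b +
        ∑ S ∈ smallSubsets α, (closedWalkCount (transpositionsPreserving S) b : ℝ) := by
  simp only [transitivityDefect, Finset.sum_add_distrib, Finset.sum_sub_distrib]
  congr 1
  · simp [transitiveClosedWalkCount, closedWalkCount, Finset.filter_filter]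
  · simp only [closedWalkCount_transpositionsPreserving_eq]
    exact_mod_cast Finset.sum_card_bipartiteAbove_eq_sum_card_bipartiteBelow
      fun (τ : Fin b → Perm α) S => ∀ i, τ i ∈ transpositionsPreserving S

lemma abs_transitivityDefect_le {b : ℕ} (τ : Fin b → Perm α) :
    |transitivityDefect τ| ≤ (smallSubsets α).card + 1 := by
  have card_le : ({S ∈ smallSubsets α | ∀ i, τ i ∈ transpositionsPreserving S}.card : ℝ) ≤
      (smallSubsets α).card := by
    exact_mod_cast Finset.card_filter_le _ _
  rw [transitivityDefect, abs_le]
  split_ifs <;> constructor <;> linarith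

lemma transitivityDefect_eq_zero {b : ℕ} {τ : Fin b → Perm α} (hα : 5 ≤ Fintype.card α)
    (hS₀ : S₀.card = 2) (hτ : ∀ i, τ i ∈ transpositions α)
    (many : τ ∉ wordsWithFewLetters _ (transpositionsPreserving S₀).card b) :
    transitivityDefect τ = 0 := by
  rw [mem_wordsWithFewLetters, not_lt] at many
  rw [transitivityDefect, sub_add_eq_add_sub, sub_eq_zero]
  exact_mod_cast ite_generatesTransitively_add_card_smallSubsets hα hS₀ hτ many

theorem isLittleO_transitiveClosedWalkCount_sub_add_sum (hα : 5 ≤ Fintype.card α)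
    (hS₀ : S₀.card = 2) :
    (fun b => (transitiveClosedWalkCount (transpositions α) b : ℝ) -
        closedWalkCount (transpositions α) b +
        ∑ S ∈ smallSubsets α, (closedWalkCount (transpositionsPreserving S) b : ℝ))
      =o[atTop] fun b => ((transpositionsPreserving S₀).card : ℝ) ^ b := by
  have card_pos := (transpositionsPreserving_nonempty hS₀).card_pos
  refine IsBigO.trans_isLittleO (IsBigO.of_bound ((smallSubsets α).card + 1)
    (.of_forall fun b => ?_)) (isLittleO_card_wordsWithFewLetters (X := Perm α) card_pos)
  set few := wordsWithFewLetters (Perm α) (transpositionsPreserving S₀).card b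
  rw [← sum_transitivityDefect, Real.norm_natCast]
  set W : Finset (Fin b → Perm α) :=
    {τ ∈ Fintype.piFinset fun _ => transpositions α | (List.ofFn τ).prod = 1}
  have defect_eq_zero : ∀ τ ∈ W, τ ∉ W ∩ few → transitivityDefect τ = 0 := fun τ hτ hτ' =>
    transitivityDefect_eq_zero hα hS₀ (Fintype.mem_piFinset.1 (Finset.mem_filter.1 hτ).1)
      fun h => hτ' (Finset.mem_inter.2 ⟨hτ, h⟩)
  calc ‖∑ τ ∈ W, transitivityDefect τ‖
    _ = ‖∑ τ ∈ W ∩ few, transitivityDefect τ‖ := by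
      rw [Finset.sum_subset Finset.inter_subset_left defect_eq_zero]
    _ ≤ (W ∩ few).card • ((smallSubsets α).card + 1 : ℝ) :=
      norm_sum_le_of_le _ (fun τ _ => abs_transitivityDefect_le τ) |>.trans_eq (Finset.sum_const _)
    _ ≤ ((smallSubsets α).card + 1) * few.card := by
      rw [nsmul_eq_mul, mul_comm]
      gcongr
      exact Finset.inter_subset_right

end Transitivity

section TransitiveExpansion

open Asymptotics

variable {α : Type*} [Fintype α] [DecidableEq α]

lemma isLittleO_sum_singleton_closedWalkCount_sub (hα : 5 ≤ Fintype.card α) {M : ℝ}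
    (hM : (Fintype.card α - 1) * (Fintype.card α - 4) / 2 < M) :
    (fun b => ∑ i : α, (closedWalkCount (transpositionsPreserving {i}) b : ℝ) -
        (1 + (-1) ^ b) * (Fintype.card α *
          (((Fintype.card α - 1) * (Fintype.card α - 2) / 2 : ℝ) ^ b /
            (Fintype.card α - 1).factorial)))
      =o[atTop] fun b => M ^ b := by
  refine (IsLittleO.fun_sum (s := Finset.univ) fun i _ =>
    isLittleO_closedWalkCount_transpositionsPreserving_singleton_sub hα i hM).congr_left fun b => ?_
  simp only [Finset.sum_sub_distrib, Finset.sum_const, Finset.card_univ, nsmul_eq_mul]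
  ring

lemma isLittleO_sum_powersetCard_two_closedWalkCount_sub :
    (fun b => ∑ S ∈ Finset.powersetCard 2 (Finset.univ : Finset α),
          (closedWalkCount (transpositionsPreserving S) b : ℝ) -
        (1 + (-1) ^ b) * (Fintype.card α * (Fintype.card α - 1) / 2 *
          ((((Fintype.card α : ℝ) ^ 2 - 5 * Fintype.card α + 8) / 2) ^ b /
            (2 * (Fintype.card α - 2).factorial))))
      =o[atTop] fun b => (((Fintype.card α : ℝ) ^ 2 - 5 * Fintype.card α + 8) / 2) ^ b := by
  set M := ((Fintype.card α : ℝ) ^ 2 - 5 * Fintype.card α + 8) / 2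
  have pair_expansion : ∀ S ∈ Finset.powersetCard 2 (Finset.univ : Finset α),
      (fun b => (closedWalkCount (transpositionsPreserving S) b : ℝ) -
        (1 + (-1) ^ b) * (M ^ b / (2 * (Fintype.card α - 2).factorial)))
        =o[atTop] fun b => M ^ b := by
    intro S hS
    have S_card : S.card = 2 := (Finset.mem_powersetCard.1 hS).2
    have expansion := isLittleO_closedWalkCount_transpositionsPreserving_sub
      (transpositionsPreserving_nonempty S_card)
    rwa [card_transpositionsPreserving_of_card_eq_two S_card, S_card] at expansion
  refine (IsLittleO.fun_sum pair_expansion).congr_left fun b => ?_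
  rw [Finset.sum_sub_distrib, Finset.sum_const, Finset.card_powersetCard, Finset.card_univ,
    nsmul_eq_mul, Nat.cast_choose_two]
  ring

theorem isLittleO_transitiveClosedWalkCount_transpositions_sub (hα : 5 ≤ Fintype.card α) :
    (fun b => (transitiveClosedWalkCount (transpositions α) b : ℝ) - (1 + (-1) ^ b) *
        (((Fintype.card α * (Fintype.card α - 1) / 2 : ℝ) ^ b +
            (Fintype.card α - 1) ^ 2 * (Fintype.card α * (Fintype.card α - 3) / 2) ^ b) /
            (Fintype.card α).factorial -
          Fintype.card α * (((Fintype.card α - 1) * (Fintype.card α - 2) / 2) ^ b /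
            (Fintype.card α - 1).factorial) -
          Fintype.card α * (Fintype.card α - 1) / 2 *
            ((((Fintype.card α : ℝ) ^ 2 - 5 * Fintype.card α + 8) / 2) ^ b /
              (2 * (Fintype.card α - 2).factorial))))
      =o[atTop] fun b => (((Fintype.card α : ℝ) ^ 2 - 5 * Fintype.card α + 8) / 2) ^ b := by
  obtain ⟨S₀, -, hS₀⟩ := Finset.exists_subset_card_eq (s := (Finset.univ : Finset α)) (n := 2)
    (by rw [Finset.card_univ]; omega)
  have inclusion_exclusion := isLittleO_transitiveClosedWalkCount_sub_add_sum hα hS₀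
  rw [card_transpositionsPreserving_of_card_eq_two hS₀] at inclusion_exclusion
  have hM : ((Fintype.card α : ℝ) - 1) * (Fintype.card α - 4) / 2 <
      ((Fintype.card α : ℝ) ^ 2 - 5 * Fintype.card α + 8) / 2 := by linarith
  refine (((inclusion_exclusion.add
    (isLittleO_closedWalkCount_transpositions_sub (by omega) hM)).sub
    (isLittleO_sum_singleton_closedWalkCount_sub hα hM)).sub
    isLittleO_sum_powersetCard_two_closedWalkCount_sub).congr_left fun b => ?_
  rw [sum_smallSubsets]
  ring

end TransitiveExpansion

section HurwitzNumbers

open Asymptotics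

lemma hurwitz_eq_transitiveClosedWalkCount (g d : ℕ) :
    hurwitz g d =
      transitiveClosedWalkCount (transpositions (Fin d)) (2 * g + 2 * d - 2) / d.factorial := by
  classical
  rw [hurwitz, Nat.card_eq_fintype_card, Fintype.card_subtype, transitiveClosedWalkCount]
  congr 3
  ext τ
  rw [Finset.mem_filter_univ, Finset.mem_filter, Fintype.mem_piFinset]
  simp only [mem_transpositions, GeneratesTransitively]

lemma hurwitz_coefficients {d : ℕ} (hd : 2 ≤ d) (x y z w : ℝ) :
    2 * ((x + (d - 1) ^ 2 * y) / d.factorial - d * (z / (d - 1).factorial) -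
      d * (d - 1) / 2 * (w / (2 * (d - 2).factorial))) / d.factorial =
    2 / (d.factorial : ℝ) ^ 2 * x - 2 / ((d - 1).factorial : ℝ) ^ 2 * z +
      2 / ((d : ℝ) ^ 2 * ((d - 2).factorial : ℝ) ^ 2) * y -
      1 / (2 * ((d - 2).factorial : ℝ) ^ 2) * w := by
  obtain ⟨n, rfl⟩ := Nat.exists_eq_add_of_le' hd
  simp only [Nat.add_sub_cancel, show n + 2 - 1 = n + 1 from rfl, Nat.factorial_succ]
  push_cast
  field_simp
  ring

theorem isLittleO_hurwitz_sub {d : ℕ} (hd : 5 ≤ d) :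
    (fun g => hurwitz g d
        - 2 / (d.factorial : ℝ) ^ 2 * (d * (d - 1) / 2 : ℝ) ^ (2 * g + 2 * d - 2)
        + 2 / ((d - 1).factorial : ℝ) ^ 2 * ((d - 1) * (d - 2) / 2 : ℝ) ^ (2 * g + 2 * d - 2)
        - 2 / ((d : ℝ) ^ 2 * ((d - 2).factorial : ℝ) ^ 2) *
          (d * (d - 3) / 2 : ℝ) ^ (2 * g + 2 * d - 2)
        + 1 / (2 * ((d - 2).factorial : ℝ) ^ 2) *
          (((d : ℝ) ^ 2 - 5 * d + 8) / 2) ^ (2 * g + 2 * d - 2))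
      =o[atTop] fun g : ℕ => (((d : ℝ) ^ 2 - 5 * d + 8) / 2) ^ (2 * g + 2 * d - 2) := by
  have tendsto_length : Tendsto (fun g => 2 * g + 2 * d - 2) atTop atTop :=
    tendsto_atTop_mono (fun g => show g ≤ _ by omega) tendsto_id
  have expansion := (isLittleO_transitiveClosedWalkCount_transpositions_sub (α := Fin d)
    (by rwa [Fintype.card_fin])).comp_tendsto tendsto_length
  simp only [Fintype.card_fin] at expansion
  refine (expansion.const_mul_left (d.factorial : ℝ)⁻¹).congr_left fun g => ?_
  have even_length : Even (2 * g + 2 * d - 2) := ⟨g + d - 1, by omega⟩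
  rw [hurwitz_eq_transitiveClosedWalkCount, Function.comp_apply, even_length.neg_one_pow,
    one_add_one_eq_two, inv_mul_eq_div, sub_div, hurwitz_coefficients (by omega)]
  ring

end HurwitzNumbers

/-- for fixed `d ≥ 5`, the connected simple Hurwitz numbers satisfy
`H_{g,d} = T₁(g) - T₂(g) + T₃(g) - T₄(g) + o(T₄(g))` as `g → ∞`, with the four explicit
exponential terms of base `d(d-1)/2`, `(d-1)(d-2)/2`, `d(d-3)/2`, `(d²-5d+8)/2`. -/
theorem hurwitz_large_genus_subleading (d : ℕ) (hd : 5 ≤ d) :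
    Tendsto
      (fun g : ℕ =>
        (hurwitz g d
            - 2 / (Nat.factorial d : ℝ) ^ 2 *
                ((d : ℝ) * ((d : ℝ) - 1) / 2) ^ (2 * g + 2 * d - 2)
            + 2 / (Nat.factorial (d - 1) : ℝ) ^ 2 *
                (((d : ℝ) - 1) * ((d : ℝ) - 2) / 2) ^ (2 * g + 2 * d - 2)
            - 2 / ((d : ℝ) ^ 2 * (Nat.factorial (d - 2) : ℝ) ^ 2) *
                ((d : ℝ) * ((d : ℝ) - 3) / 2) ^ (2 * g + 2 * d - 2)) /
          (1 / (2 * (Nat.factorial (d - 2) : ℝ) ^ 2) *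
            (((d : ℝ) ^ 2 - 5 * (d : ℝ) + 8) / 2) ^ (2 * g + 2 * d - 2)))
      atTop (𝓝 (-1)) := by
  have fourth_base_pos : (0 : ℝ) < ((d : ℝ) ^ 2 - 5 * d + 8) / 2 := by
    nlinarith [sq_nonneg ((d : ℝ) - 5 / 2)]
  have fourth_coeff_ne_zero : 1 / (2 * (Nat.factorial (d - 2) : ℝ) ^ 2) ≠ 0 := by positivity
  have error_ratio_tendsto := ((isLittleO_hurwitz_sub hd).trans_isBigO
    (Asymptotics.isBigO_self_const_mul fourth_coeff_ne_zero _ _)).tendsto_div_nhds_zero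
  have limit := error_ratio_tendsto.add_const (-1)
  rw [zero_add] at limit
  refine limit.congr fun g => ?_
  have fourth_term_ne_zero := mul_ne_zero fourth_coeff_ne_zero
    (pow_pos fourth_base_pos (2 * g + 2 * d - 2)).ne'
  rw [add_div, div_self fourth_term_ne_zero, add_neg_cancel_right]
end
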